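/- Let R be a Noetherian ring, 𝔞 an ideal, M a finitely generated R-module, and t ≥ 0 such that H^i_𝔞(M) is weakly Laskerian for all i ≤ t. Then for every minimax submodule K of H^{t+1}_𝔞(M) and every finitely generated R-module L with Supp(L) ⊆ V(𝔞), the modules Hom_R(L, H^{t+1}_𝔞(M)/K) and Ext^1_R(L, H^{t+1}_𝔞(M)/K) are finitely generated. -/

import Mathlib

open CategoryTheory

universe u

variable (R : Type u) [CommRing R]

/-- The `i`-th Ext module `Ext^i_R(N, M)` of `R`-modules. -/
noncomputable def extModule (i : ℕ) (N M : ModuleCat.{u} R) : ModuleCat.{u} R :=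
  ((Ext R (ModuleCat.{u} R) i).obj (Opposite.op N)).obj M

/-- A module is weakly Laskerian if every quotient has finitely many associated primes. -/
def IsWeaklyLaskerian (M : Type u) [AddCommGroup M] [Module R M] : Prop :=
  ∀ N : Submodule R M, (associatedPrimes R (M ⧸ N)).Finite

/-- `M` is `𝔞`-cofinite: `Supp M ⊆ V(𝔞)` and all `Ext^i_R(R/𝔞, M)` are finitely generated. -/
def IsCofinite (𝔞 : Ideal R) (M : ModuleCat.{u} R) : Prop :=
  Module.support R M ⊆ PrimeSpectrum.zeroLocus (𝔞 : Set R) ∧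
    ∀ i : ℕ, Module.Finite R (extModule R i (ModuleCat.of R (R ⧸ 𝔞)) M)

/-- `M` is `𝔞`-weakly cofinite: `Supp M ⊆ V(𝔞)` and all `Ext^i_R(R/𝔞, M)` are weakly
Laskerian. -/
def IsWeaklyCofinite (𝔞 : Ideal R) (M : ModuleCat.{u} R) : Prop :=
  Module.support R M ⊆ PrimeSpectrum.zeroLocus (𝔞 : Set R) ∧
    ∀ i : ℕ, IsWeaklyLaskerian R (extModule R i (ModuleCat.of R (R ⧸ 𝔞)) M)

/-- The Krull dimension of the support of a module. -/
noncomputable def suppDim (M : Type u) [AddCommGroup M] [Module R M] : WithBot ℕ∞ :=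
  Order.krullDim (Module.support R M)

/-- The cohomological dimension `cd(𝔞, M) = sup {i | H^i_𝔞(M) ≠ 0}`, as an element of `ℕ∞`. -/
noncomputable def cohomologicalDim (𝔞 : Ideal R) (M : ModuleCat.{u} R) : ℕ∞ :=
  ⨆ i ∈ {i : ℕ | Nontrivial ((localCohomology 𝔞 i).obj M)}, (i : ℕ∞)

/-- `p` is an attached prime of `M`: `p` is prime and is the annihilator of a quotient
of `M`. -/
def IsAttachedPrime (M : Type u) [AddCommGroup M] [Module R M] (p : Ideal R) : Prop :=
  p.IsPrime ∧ ∃ N : Submodule R M, p = Module.annihilator R (M ⧸ N)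


section Part1

variable {R}

/-- finite generation of `Ext^n(R/a, N)`. -/
def FE (a : Ideal R) (N : Type u) [AddCommGroup N] [Module R N] (n : ℕ) : Prop :=
  Module.Finite R (Abelian.Ext (ModuleCat.of R (R ⧸ a)) (ModuleCat.of R N) n)

/-- all `Ext^n(R/a, N)` are finitely generated. -/
def Good (a : Ideal R) (N : Type u) [AddCommGroup N] [Module R N] : Prop :=
  ∀ n, FE a N n

lemma finite_of_exact [IsNoetherianRing R] {A B C : Type*} [AddCommGroup A] [AddCommGroup B]
    [AddCommGroup C] [Module R A] [Module R B] [Module R C] (f : A →ₗ[R] B) (g : B →ₗ[R] C)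
    (h : ∀ b, g b = 0 → ∃ a, f a = b) (hA : Module.Finite R A) (hC : Module.Finite R C) :
    Module.Finite R B := by
  have h1 : IsNoetherian R (LinearMap.range f) := inferInstance
  have h2 : IsNoetherian R (LinearMap.ker g) :=
    isNoetherian_of_le (s := LinearMap.ker g) (t := LinearMap.range f) (fun b hb => h b hb)
  have : IsNoetherian R C := inferInstance
  have : IsNoetherian R B := isNoetherian_of_range_eq_ker (LinearMap.ker g).subtype g (by simp)
  infer_instance

lemma finite_of_ker [IsNoetherianRing R] {A B C : Type*} [AddCommGroup A] [AddCommGroup B]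
    [AddCommGroup C] [Module R A] [Module R B] [Module R C] (f : A →ₗ[R] B) (g : B →ₗ[R] C)
    (h : ∀ a, g (f a) = 0) (hA : Module.Finite R (LinearMap.ker f))
    (hC : Module.Finite R (LinearMap.ker g)) :
    Module.Finite R A :=
  finite_of_exact (LinearMap.ker f).subtype (f.codRestrict (LinearMap.ker g) h)
    (fun b hb => ⟨⟨b, (congrArg Subtype.val hb :)⟩, rfl⟩) hA hC

section SES
variable {A B C : Type u} [AddCommGroup A] [AddCommGroup B] [AddCommGroup C]
  [Module R A] [Module R B] [Module R C]

/-- short complex from an exact sequence -/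
abbrev sc (f : A →ₗ[R] B) (g : B →ₗ[R] C) (h : Function.Exact f g) :
    ShortComplex (ModuleCat.{u} R) :=
  ModuleCat.shortComplexOfCompEqZero f g h.linearMap_comp_eq_zero

lemma sc_exact (f : A →ₗ[R] B) (g : B →ₗ[R] C) (h : Function.Exact f g)
    (hf : Function.Injective f) (hg : Function.Surjective g) : (sc f g h).ShortExact :=
  ModuleCat.shortComplex_shortExact _ h hf hg

variable [IsNoetherianRing R] {a : Ideal R}

lemma FE.mid (f : A →ₗ[R] B) (g : B →ₗ[R] C)
    (h : Function.Exact f g) (hf : Function.Injective f) (hg : Function.Surjective g)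
    {n : ℕ} (hA : FE a A n) (hC : FE a C n) : FE a B n :=
  finite_of_exact (R := R)
    ((Abelian.Ext.mk₀ (sc f g h).f).postcompOfLinear R (ModuleCat.of R (R ⧸ a)) (add_zero n))
    ((Abelian.Ext.mk₀ (sc f g h).g).postcompOfLinear R (ModuleCat.of R (R ⧸ a)) (add_zero n))
    (fun b hb => Abelian.Ext.covariant_sequence_exact₂ _ (sc_exact f g h hf hg) b hb) hA hC

lemma FE.right (f : A →ₗ[R] B) (g : B →ₗ[R] C)
    (h : Function.Exact f g) (hf : Function.Injective f) (hg : Function.Surjective g)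
    {n : ℕ} (hB : FE a B n) (hA : FE a A (n + 1)) : FE a C n :=
  finite_of_exact (R := R)
    ((Abelian.Ext.mk₀ (sc f g h).g).postcompOfLinear R (ModuleCat.of R (R ⧸ a)) (add_zero n))
    ((sc_exact f g h hf hg).extClass.postcompOfLinear R (ModuleCat.of R (R ⧸ a)) rfl)
    (fun b hb => Abelian.Ext.covariant_sequence_exact₃ _ (sc_exact f g h hf hg) b rfl hb) hB hA

lemma FE.left (f : A →ₗ[R] B) (g : B →ₗ[R] C)
    (h : Function.Exact f g) (hf : Function.Injective f) (hg : Function.Surjective g)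
    {n : ℕ} (hC : FE a C n) (hB : FE a B (n + 1)) : FE a A (n + 1) :=
  finite_of_exact (R := R)
    ((sc_exact f g h hf hg).extClass.postcompOfLinear R (ModuleCat.of R (R ⧸ a)) rfl)
    ((Abelian.Ext.mk₀ (sc f g h).f).postcompOfLinear R (ModuleCat.of R (R ⧸ a)) (add_zero (n + 1)))
    (fun b hb => Abelian.Ext.covariant_sequence_exact₁ _ (sc_exact f g h hf hg) b hb rfl) hC hB

lemma Good.mid (f : A →ₗ[R] B) (g : B →ₗ[R] C)
    (h : Function.Exact f g) (hf : Function.Injective f) (hg : Function.Surjective g)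
    (hA : Good a A) (hC : Good a C) : Good a B :=
  fun n => FE.mid f g h hf hg (hA n) (hC n)

lemma Good.right (f : A →ₗ[R] B) (g : B →ₗ[R] C)
    (h : Function.Exact f g) (hf : Function.Injective f) (hg : Function.Surjective g)
    (hA : Good a A) (hB : Good a B) : Good a C :=
  fun n => FE.right f g h hf hg (hB n) (hA _)

/-- kernel of the map induced by a surjection -/
lemma FE.ker_right (f : A →ₗ[R] B) (g : B →ₗ[R] C)
    (h : Function.Exact f g) (hf : Function.Injective f) (hg : Function.Surjective g)
    {n : ℕ} (hA : FE a A n) : Module.Finite R (LinearMap.ker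
    ((Abelian.Ext.mk₀ (sc f g h).g).postcompOfLinear R (ModuleCat.of R (R ⧸ a)) (add_zero n))) := by
  have : Module.Finite R (LinearMap.range
    ((Abelian.Ext.mk₀ (sc f g h).f).postcompOfLinear R (ModuleCat.of R (R ⧸ a)) (add_zero n))) := by
    have : Module.Finite R (Abelian.Ext (ModuleCat.of R (R ⧸ a)) (sc f g h).X₁ n) := hA
    infer_instance
  have := isNoetherian_of_isNoetherianRing_of_finite R (LinearMap.range
    ((Abelian.Ext.mk₀ (sc f g h).f).postcompOfLinear R (ModuleCat.of R (R ⧸ a)) (add_zero n)))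
  have := isNoetherian_of_le (s := LinearMap.ker
    ((Abelian.Ext.mk₀ (sc f g h).g).postcompOfLinear R (ModuleCat.of R (R ⧸ a)) (add_zero n)))
    (t := LinearMap.range
    ((Abelian.Ext.mk₀ (sc f g h).f).postcompOfLinear R (ModuleCat.of R (R ⧸ a)) (add_zero n)))
    (fun b hb => Abelian.Ext.covariant_sequence_exact₂ _ (sc_exact f g h hf hg) b hb)
  infer_instance

lemma FE.ker_left (f : A →ₗ[R] B) (g : B →ₗ[R] C)
    (h : Function.Exact f g) (hf : Function.Injective f) (hg : Function.Surjective g)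
    {n : ℕ} (hC : ∀ m, m + 1 = n → FE a C m) : Module.Finite R (LinearMap.ker
    ((Abelian.Ext.mk₀ (sc f g h).f).postcompOfLinear R (ModuleCat.of R (R ⧸ a)) (add_zero n))) := by
  have hS := sc_exact f g h hf hg
  cases n with
  | zero =>
    have : LinearMap.ker
      ((Abelian.Ext.mk₀ (sc f g h).f).postcompOfLinear R (ModuleCat.of R (R ⧸ a)) (add_zero 0))
        = ⊥ := by
      have := hS.mono_f
      exact LinearMap.ker_eq_bot.2 (Abelian.Ext.postcomp_mk₀_injective_of_mono _ (sc f g h).f)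
    rw [this]
    infer_instance
  | succ n =>
    have : Module.Finite R (Abelian.Ext (ModuleCat.of R (R ⧸ a)) (sc f g h).X₃ n) := hC n rfl
    have := isNoetherian_of_isNoetherianRing_of_finite R (LinearMap.range
      (hS.extClass.postcompOfLinear R (ModuleCat.of R (R ⧸ a)) (rfl : n + 1 = n + 1)))
    have := isNoetherian_of_le (s := LinearMap.ker
      ((Abelian.Ext.mk₀ (sc f g h).f).postcompOfLinear R (ModuleCat.of R (R ⧸ a)) (add_zero (n+1))))
      (t := LinearMap.range
      (hS.extClass.postcompOfLinear R (ModuleCat.of R (R ⧸ a)) (rfl : n + 1 = n + 1)))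
      (fun b hb => Abelian.Ext.covariant_sequence_exact₁ _ hS b hb rfl)
    infer_instance

end SES

lemma FE.congr {a : Ideal R} {A B : Type u} [AddCommGroup A] [AddCommGroup B]
  [Module R A] [Module R B] (e : A ≃ₗ[R] B) {n : ℕ} (hA : FE a A n) : FE a B n := by
  have : Module.Finite R (Abelian.Ext (ModuleCat.of R (R ⧸ a)) (ModuleCat.of R A) n) := hA
  refine Module.Finite.of_surjective (R := R)
    ((Abelian.Ext.mk₀ (ModuleCat.ofHom e.toLinearMap)).postcompOfLinear R
      (ModuleCat.of R (R ⧸ a)) (add_zero n)) ?_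
  intro y
  refine ⟨y.comp (Abelian.Ext.mk₀ (ModuleCat.ofHom e.symm.toLinearMap)) (add_zero n), ?_⟩
  simp [← ModuleCat.ofHom_comp]

lemma Good.congr {a : Ideal R} {A B : Type u} [AddCommGroup A] [AddCommGroup B]
  [Module R A] [Module R B] (e : A ≃ₗ[R] B) (hA : Good a A) : Good a B :=
  fun n => FE.congr e (hA n)

lemma Good.of_finite [IsNoetherianRing R] (a : Ideal R) (A : Type u) [AddCommGroup A]
    [Module R A] [Module.Finite R A] : Good a A := fun n =>
  ModuleCat.finite_ext R (ModuleCat.of R (R ⧸ a)) (ModuleCat.of R A) n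

/-- `Hom(R/a, N)` is `0 :_N a`. -/
lemma FE.zero_iff (a : Ideal R) (N : Type u) [AddCommGroup N] [Module R N] :
    FE a N 0 ↔ Module.Finite R (Submodule.torsionBySet R N (a : Set R)) := by
  let e1 := (Abelian.Ext.linearEquiv₀ (R := R) (X := ModuleCat.of R (R ⧸ a))
    (Y := ModuleCat.of R N)).trans (ModuleCat.homLinearEquiv (S := R))
  let e2 : ((R ⧸ a) →ₗ[R] N) ≃ₗ[R] Submodule.torsionBySet R N (a : Set R) :=
    { toFun := fun φ => ⟨φ 1, by
        rw [Submodule.mem_torsionBySet_iff]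
        rintro ⟨r, hr⟩
        have : (r • (1 : R ⧸ a)) = 0 := by
          rw [Algebra.smul_def, mul_one]
          exact Ideal.Quotient.eq_zero_iff_mem.2 hr
        show r • φ 1 = 0
        rw [← map_smul, this, map_zero]⟩
      map_add' := fun _ _ => rfl
      map_smul' := fun _ _ => rfl
      invFun := fun y => a.liftQ (LinearMap.toSpanSingleton R N y.1) (by
        intro r hr
        have := (Submodule.mem_torsionBySet_iff (a : Set R) y.1).1 y.2 ⟨r, hr⟩
        simpa using this)
      left_inv := fun φ => by
        apply Submodule.linearMap_qext
        ext
        simp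
      right_inv := fun y => by
        ext
        exact (Submodule.liftQ_apply _ _ (1 : R)).trans (one_smul R y.1) }
  exact ⟨fun h => by
    have : Module.Finite R (Abelian.Ext (ModuleCat.of R (R ⧸ a)) (ModuleCat.of R N) 0) := h
    exact Module.Finite.equiv (e1.trans e2), fun h => Module.Finite.equiv (e1.trans e2).symm⟩

lemma ext_smul_zero {a : Ideal R} {x : R} (hx : x ∈ a) {Y : ModuleCat.{u} R} {n : ℕ}
    (y : Abelian.Ext (ModuleCat.of R (R ⧸ a)) Y n) : x • y = 0 := by
  have : x • 𝟙 (ModuleCat.of R (R ⧸ a)) = 0 := by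
    ext
    show x • (Submodule.Quotient.mk (1 : R) : R ⧸ a) = 0
    rw [← Submodule.Quotient.mk_smul, Submodule.Quotient.mk_eq_zero]
    simpa using hx
  have h2 : x • y = (Abelian.Ext.mk₀ (x • 𝟙 (ModuleCat.of R (R ⧸ a)))).comp y (zero_add n) := by
    simp [Abelian.Ext.mk₀_smul]
  rw [h2, this]
  simp

/-- Melkersson's lemma: if `x ∈ a`, then `Ext^n(R/a, N)` is finitely generated as soon as
`Ext^n(R/a, 0 :_N x)` and `Ext^(n-1)(R/a, N/xN)` are. -/
lemma Good.of_mul [IsNoetherianRing R] {a : Ideal R} {x : R} (hx : x ∈ a)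
    {N : Type u} [AddCommGroup N] [Module R N]
    (h1 : Good a (LinearMap.ker (LinearMap.lsmul R N x)))
    (h2 : Good a (N ⧸ (LinearMap.range (LinearMap.lsmul R N x)))) : Good a N := by
  intro n
  set φ := LinearMap.lsmul R N x with hφ
  have e1 : Function.Exact (LinearMap.ker φ).subtype φ.rangeRestrict := by
    intro y
    simp [Subtype.ext_iff]
  have e2 : Function.Exact (LinearMap.range φ).subtype (LinearMap.range φ).mkQ :=
    LinearMap.exact_subtype_mkQ _
  have k1 := FE.ker_right (a := a) (n := n) _ _ e1 (Submodule.subtype_injective _)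
    (LinearMap.surjective_rangeRestrict _) (h1 n)
  have k2 := FE.ker_left (a := a) (n := n) _ _ e2 (Submodule.subtype_injective _)
    (Submodule.mkQ_surjective _) (fun m _ => h2 m)
  refine finite_of_ker (R := R) _ _ ?_ k1 k2
  intro y
  have : (sc _ _ e1).g ≫ (sc _ _ e2).f = x • 𝟙 (ModuleCat.of R N) := by
    ext z
    simp [hφ]
  change (y.comp (Abelian.Ext.mk₀ (sc _ _ e1).g) (add_zero n)).comp
    (Abelian.Ext.mk₀ (sc _ _ e2).f) (add_zero n) = 0
  rw [Abelian.Ext.comp_assoc_of_third_deg_zero, Abelian.Ext.mk₀_comp_mk₀, this,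
    Abelian.Ext.mk₀_smul]
  simp [ext_smul_zero hx]

end Part1

section Part2

variable {R}

lemma isArtinian_of_torsion_one {S : Type*} [CommRing S] {D : Type*} [AddCommGroup D] [Module S D]
    (x : S) (ht : ∀ d : D, ∃ k : ℕ, x ^ k • d = 0)
    (hA : IsArtinian S (LinearMap.ker (LinearMap.lsmul S D x))) : IsArtinian S D := by
  rw [← monotone_stabilizes_iff_artinian]
  intro f
  obtain ⟨F, hF⟩ : ∃ F : ℕ → Submodule S D, ∀ n, OrderDual.ofDual (f n) = F n := ⟨_, fun _ => rfl⟩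
  have hf : ∀ {n m : ℕ}, n ≤ m → F m ≤ F n := fun {n m} h => by
    rw [← hF, ← hF]; exact f.monotone h
  let A : ℕ → ℕ → Submodule S (LinearMap.ker (LinearMap.lsmul S D x)) := fun n k =>
    ((F n).map (LinearMap.lsmul S D (x ^ k))).comap (Submodule.subtype _)
  have hmem : ∀ n k z, z ∈ A n k ↔ ∃ d ∈ (F n), x ^ k • d = z.1 := by
    intro n k z
    simp only [A, Submodule.mem_comap, Submodule.mem_map, Submodule.subtype_apply,
      LinearMap.lsmul_apply]
  have hmono : ∀ {n m k l : ℕ}, n ≤ m → k ≤ l → A m l ≤ A n k := by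
    intro n m k l h1 h2 z hz
    rw [hmem] at hz ⊢
    obtain ⟨d, hd, h⟩ := hz
    refine ⟨x ^ (l - k) • d, Submodule.smul_mem _ _ (hf h1 hd), ?_⟩
    rw [smul_smul, ← pow_add, Nat.add_sub_cancel' h2, h]
  have hst := (monotone_stabilizes_iff_artinian (R := S)
    (M := LinearMap.ker (LinearMap.lsmul S D x))).2 hA
  obtain ⟨n1, hn1⟩ := hst ⟨fun n => OrderDual.toDual (A n n), fun n m h => hmono h h⟩
  have hn1' : ∀ m, n1 ≤ m → A n1 n1 = A m m := hn1
  have hk : ∀ k, ∃ N, ∀ m, N ≤ m → A N k = A m k := fun k =>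
    hst ⟨fun n => OrderDual.toDual (A n k), fun n m h => hmono h le_rfl⟩
  choose N hN using hk
  let n0 := n1 + (Finset.range n1).sum N
  have key : ∀ k m, n0 ≤ m → A n0 k ≤ A m k := by
    intro k m hm
    by_cases h : k < n1
    · have h1 : N k ≤ n0 := le_trans (Finset.single_le_sum (f := N) (fun _ _ => Nat.zero_le _)
        (Finset.mem_range.2 h)) (Nat.le_add_left _ _)
      rw [← hN k n0 h1, ← hN k m (h1.trans hm)]
    · push Not at h
      have h1 : n1 ≤ n0 := Nat.le_add_right _ _
      calc A n0 k ≤ A n1 n1 := hmono h1 h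
        _ = A (max m k) (max m k) := hn1' _ (h.trans (le_max_right _ _))
        _ ≤ A m k := hmono (le_max_left _ _) (le_max_right _ _)
  refine ⟨n0, fun m hm => OrderDual.ofDual.injective ?_⟩
  rw [hF, hF]
  refine le_antisymm ?_ (hf hm)
  have main : ∀ k (d : D), d ∈ F n0 → x ^ k • d = 0 →
      d ∈ F m := by
    intro k
    induction k with
    | zero =>
      intro d _ h
      rw [pow_zero, one_smul] at h
      rw [h]
      exact Submodule.zero_mem _
    | succ k ih =>
      intro d hd h
      have h1 : (⟨x ^ k • d, by
        rw [LinearMap.mem_ker, LinearMap.lsmul_apply, smul_smul, ← pow_succ', h]⟩ : LinearMap.ker (LinearMap.lsmul S D x)) ∈ A n0 k :=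
        (hmem _ _ _).2 ⟨d, hd, rfl⟩
      obtain ⟨d', hd', h2⟩ := (hmem _ _ _).1 (key k m hm h1)
      have h3 := ih (d - d') (Submodule.sub_mem _ hd (hf hm hd')) (by
        rw [smul_sub, h2]; exact sub_self _)
      simpa using Submodule.add_mem _ h3 hd'
  intro d hd
  obtain ⟨k, hk⟩ := ht d
  exact main k d hd hk

lemma isArtinian_of_torsion {S : Type*} [CommRing S] (s : Finset S) :
    ∀ {D : Type u} [AddCommGroup D] [Module S D],
    (∀ x ∈ s, ∀ d : D, ∃ k : ℕ, x ^ k • d = 0) →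
    (IsArtinian S (Submodule.torsionBySet S D (s : Set S))) → IsArtinian S D := by
  classical
  induction s using Finset.induction_on with
  | empty =>
    intro D _ _ _ h
    have : Submodule.torsionBySet S D ((∅ : Finset S) : Set S) = ⊤ := by
      ext; simp [Submodule.mem_torsionBySet_iff]
    rw [this] at h
    exact LinearEquiv.isArtinian_iff Submodule.topEquiv |>.1 h
  | insert x s hxs ih =>
    intro D _ _ ht h
    apply isArtinian_of_torsion_one x (ht x (Finset.mem_insert_self _ _))
    apply ih
    · intro y hy d
      obtain ⟨k, hk⟩ := ht y (Finset.mem_insert_of_mem hy) d.1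
      exact ⟨k, Subtype.ext (by simpa using hk)⟩
    · let g : Submodule.torsionBySet S (LinearMap.ker (LinearMap.lsmul S D x)) (s : Set S) →ₗ[S]
        Submodule.torsionBySet S D ((insert x s : Finset S) : Set S) :=
        LinearMap.codRestrict _ ((Submodule.subtype _).comp (Submodule.subtype _)) (by
          intro z
          rw [Submodule.mem_torsionBySet_iff]
          rintro ⟨y, hy⟩
          have h1 := (Submodule.mem_torsionBySet_iff _ _).1 z.2
          rcases Finset.mem_insert.1 (Finset.mem_coe.1 hy) with rfl | hy
          · exact LinearMap.mem_ker.1 z.1.2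
          · simpa [Subtype.ext_iff] using h1 ⟨y, hy⟩)
      have hg : Function.Injective g := by
        intro z w hzw
        apply Subtype.ext
        apply Subtype.ext
        have := Subtype.ext_iff.1 hzw
        exact this
      exact isArtinian_of_injective g hg

lemma artinian_induction {S : Type*} [CommRing S] {A : Type u} [AddCommGroup A] [Module S A]
    [IsArtinian S A] (p : ∀ (N : Type u) [AddCommGroup N] [Module S N], Prop)
    (hc : ∀ (N N' : Type u) [AddCommGroup N] [Module S N] [AddCommGroup N'] [Module S N']
      (_ : N ≃ₗ[S] N'), p N → p N')
    (step : ∀ P : Submodule S A, (∀ Q : Submodule S P, Q ≠ ⊤ → p Q) → p P) : p A := by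
  have main : ∀ P : Submodule S A, p P := by
    intro P
    refine (wellFounded_lt (α := Submodule S A)).induction (C := fun P => p P) P ?_
    · intro P ih
      refine step P fun Q hQ => ?_
      have hlt : Q.map P.subtype < P := by
        refine lt_of_le_of_ne (Submodule.map_subtype_le P Q) fun h => hQ ?_
        apply Submodule.map_injective_of_injective P.subtype_injective
        rw [h, Submodule.map_top, Submodule.range_subtype]
      exact hc _ _ (Submodule.equivMapOfInjective P.subtype P.subtype_injective Q).symm (ih _ hlt)
  exact hc _ _ Submodule.topEquiv (main ⊤)

lemma ker_range_exact {S : Type*} [CommRing S] {N N' : Type u} [AddCommGroup N] [Module S N]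
    [AddCommGroup N'] [Module S N'] (φ : N →ₗ[S] N') :
    Function.Exact (LinearMap.ker φ).subtype φ.rangeRestrict := by
  intro y
  simp [Subtype.ext_iff]

lemma Good.of_isArtinian [IsNoetherianRing R] {a : Ideal R} {A : Type u} [AddCommGroup A]
    [Module R A] [IsArtinian R A]
    (h : Module.Finite R (Submodule.torsionBySet R A (a : Set R))) : Good a A := by
  refine artinian_induction (A := A) (fun N _ _ => Good a N) (fun N N' _ _ _ _ e h => h.congr e) ?_
  intro P hP
  by_cases hx : ∃ x ∈ a, LinearMap.ker (LinearMap.lsmul R P x) ≠ ⊤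
  · obtain ⟨x, hxa, hx⟩ := hx
    by_cases hr : LinearMap.range (LinearMap.lsmul R P x) = ⊤
    · refine Good.of_mul hxa (hP _ hx) ?_
      have : Subsingleton (P ⧸ LinearMap.range (LinearMap.lsmul R P x)) :=
        Submodule.Quotient.subsingleton_iff.2 hr
      exact Good.of_finite _ _
    · exact Good.mid _ _ (ker_range_exact (LinearMap.lsmul R P x)) (Submodule.subtype_injective _)
        (LinearMap.surjective_rangeRestrict _) (hP _ hx) (hP _ hr)
  · push Not at hx
    have hle : P ≤ Submodule.torsionBySet R A (a : Set R) := by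
      intro z hz
      rw [Submodule.mem_torsionBySet_iff]
      rintro ⟨x, hxa⟩
      have : (⟨z, hz⟩ : P) ∈ LinearMap.ker (LinearMap.lsmul R P x) := by
        rw [hx x hxa]; trivial
      simpa [Subtype.ext_iff] using this
    have := isNoetherian_of_isNoetherianRing_of_finite R (Submodule.torsionBySet R A (a : Set R))
    have := isNoetherian_of_le hle
    exact Good.of_finite _ _

/-- `A/xA` is finitely generated. -/
def FQ {S : Type*} [CommRing S] (x : S) (A : Type*) [AddCommGroup A] [Module S A] : Prop :=
  ∃ F : Submodule S A, F.FG ∧ ∀ z, ∃ f ∈ F, ∃ w, z = f + x • w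

lemma FQ.congr {S : Type*} [CommRing S] {x : S} {A B : Type*} [AddCommGroup A] [Module S A]
    [AddCommGroup B] [Module S B] (e : A ≃ₗ[S] B) (h : FQ x A) : FQ x B := by
  obtain ⟨F, hF, h⟩ := h
  refine ⟨F.map e.toLinearMap, hF.map _, fun z => ?_⟩
  obtain ⟨f, hf, w, hw⟩ := h (e.symm z)
  refine ⟨e f, Submodule.mem_map_of_mem hf, e w, ?_⟩
  rw [← map_smul, ← map_add, ← hw, e.apply_symm_apply]

lemma FQ.ext {S : Type*} [CommRing S] {x : S} {A B : Type*} [AddCommGroup A] [Module S A]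
    [AddCommGroup B] [Module S B] (φ : A →ₗ[S] B) (h1 : FQ x (LinearMap.ker φ))
    (h2 : FQ x (LinearMap.range φ)) : FQ x A := by
  obtain ⟨F1, hF1, h1⟩ := h1
  obtain ⟨F2, hF2, h2⟩ := h2
  obtain ⟨F2', hF2', rfl⟩ : ∃ F2' : Submodule S A, F2'.FG ∧ F2'.map φ.rangeRestrict = F2 := by
    obtain ⟨s, hs, rfl⟩ := Submodule.fg_def.1 hF2
    choose g hg using LinearMap.surjective_rangeRestrict φ
    refine ⟨Submodule.span S (g '' s), Submodule.fg_span (hs.image _), ?_⟩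
    rw [Submodule.map_span, Set.image_image]
    simp [hg]
  refine ⟨F1.map (Submodule.subtype _) ⊔ F2', (hF1.map _).sup hF2', fun z => ?_⟩
  obtain ⟨_, ⟨f, hf, rfl⟩, ⟨_, w, rfl⟩, hz⟩ := h2 (φ.rangeRestrict z)
  have hz' : φ z = φ f + x • φ w := congrArg Subtype.val hz
  obtain ⟨f1, hf1, w1, hz1⟩ := h1 ⟨z - f - x • w, by simp [hz']⟩
  have hz1' : z - f - x • w = f1.1 + x • w1.1 := congrArg Subtype.val hz1
  refine ⟨f1.1 + f, Submodule.add_mem_sup (Submodule.mem_map_of_mem hf1) hf, w + w1.1, ?_⟩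
  rw [smul_add]
  have : z = (z - f - x • w) + f + x • w := by abel
  rw [this, hz1']
  show f1.1 + x • w1.1 + f + x • w = f1.1 + f + (x • w + x • w1.1)
  abel

lemma exists_primes {S : Type*} [CommRing S] [IsNoetherianRing S] {b : Ideal S} {A : Type u}
    [AddCommGroup A] [Module S A] [IsArtinian S A]
    (h : Module.Finite S (Submodule.torsionBySet S A (b : Set S))) :
    ∃ Q : Set (Ideal S), Q.Finite ∧ (∀ q ∈ Q, q.IsPrime ∧ ¬ b ≤ q) ∧
      ∀ x ∈ b, (∀ q ∈ Q, x ∉ q) → FQ x A := by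
  refine artinian_induction (A := A) (fun (N : Type u) [AddCommGroup N] [Module S N] =>
    ∃ Q : Set (Ideal S), Q.Finite ∧ (∀ q ∈ Q, q.IsPrime ∧ ¬ b ≤ q) ∧
      ∀ x ∈ b, (∀ q ∈ Q, x ∉ q) → FQ x N) ?_ ?_
  · rintro N N' _ _ _ _ e ⟨Q, h1, h2, h3⟩
    exact ⟨Q, h1, h2, fun x hx hq => (h3 x hx hq).congr e⟩
  intro P hP
  by_cases hx : ∃ x, LinearMap.ker (LinearMap.lsmul S P x) ≠ ⊤ ∧
    LinearMap.range (LinearMap.lsmul S P x) ≠ ⊤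
  · obtain ⟨x, hk, hr⟩ := hx
    obtain ⟨Q1, h1, h2, h3⟩ := hP _ hk
    obtain ⟨Q2, h1', h2', h3'⟩ := hP _ hr
    refine ⟨Q1 ∪ Q2, h1.union h1', ?_, fun y hy hq => ?_⟩
    · rintro q (hq | hq)
      exacts [h2 q hq, h2' q hq]
    · exact FQ.ext _ (h3 y hy fun q h => hq q (Or.inl h)) (h3' y hy fun q h => hq q (Or.inr h))
  push Not at hx
  by_cases hb : ∃ x ∈ b, LinearMap.ker (LinearMap.lsmul S P x) ≠ ⊤
  · obtain ⟨x0, hx0b, hx0⟩ := hb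
    have hkm : ∀ x, LinearMap.ker (LinearMap.lsmul S P x) = ⊤ ↔ x ∈ Module.annihilator S P := by
      intro x
      rw [Module.mem_annihilator]
      constructor
      · intro h m
        have : m ∈ LinearMap.ker (LinearMap.lsmul S P x) := by rw [h]; trivial
        simpa using this
      · intro h
        ext m
        simpa using h m
    refine ⟨{Module.annihilator S P}, Set.finite_singleton _, ?_, ?_⟩
    · rintro q rfl
      refine ⟨⟨fun h => hx0 ((hkm x0).2 (h ▸ trivial)), fun {x y} hxy => ?_⟩,
        fun h => hx0 ((hkm x0).2 (h hx0b))⟩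
      by_contra! hcon
      have hr := hx y (fun h => hcon.2 ((hkm y).1 h))
      apply hcon.1
      rw [Module.mem_annihilator] at hxy ⊢
      intro m
      have : m ∈ LinearMap.range (LinearMap.lsmul S P y) := by rw [hr]; trivial
      obtain ⟨m', rfl⟩ := this
      simpa [smul_smul] using hxy m'
    · intro y hy hq
      have hr := hx y (fun h => hq _ rfl ((hkm y).1 h))
      refine ⟨⊥, Submodule.fg_bot, fun z => ?_⟩
      have : z ∈ LinearMap.range (LinearMap.lsmul S P y) := by rw [hr]; trivial
      obtain ⟨m', rfl⟩ := this
      exact ⟨0, Submodule.zero_mem _, m', by simp⟩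
  · push Not at hb
    have hle : P ≤ Submodule.torsionBySet S A (b : Set S) := by
      intro z hz
      rw [Submodule.mem_torsionBySet_iff]
      rintro ⟨x, hxa⟩
      have : (⟨z, hz⟩ : P) ∈ LinearMap.ker (LinearMap.lsmul S P x) := by
        rw [hb x hxa]; trivial
      simpa [Subtype.ext_iff] using this
    have := isNoetherian_of_isNoetherianRing_of_finite S (Submodule.torsionBySet S A (b : Set S))
    have := isNoetherian_of_le hle
    exact ⟨∅, Set.finite_empty, by simp, fun x _ _ =>
      ⟨⊤, IsNoetherian.noetherian _, fun z => ⟨z, trivial, 0, by simp⟩⟩⟩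

end Part2

section Part3

variable {R}

lemma mem_supp_quot {N : Type u} [AddCommGroup N] [Module R N] (W : Submodule R N)
    (p : PrimeSpectrum R) :
    p ∈ Module.support R (N ⧸ W) ↔ ∃ y : N, ∀ r, r • y ∈ W → r ∈ p.asIdeal := by
  rw [Module.mem_support_iff']
  constructor
  · rintro ⟨m, hm⟩
    obtain ⟨y, rfl⟩ := Submodule.mkQ_surjective W m
    refine ⟨y, fun r hr => ?_⟩
    by_contra h
    refine hm r h ?_
    rw [← map_smul]
    exact (Submodule.Quotient.mk_eq_zero W).2 hr
  · rintro ⟨y, hy⟩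
    refine ⟨W.mkQ y, fun r hr h => hr (hy r ?_)⟩
    rw [← map_smul] at h
    exact (Submodule.Quotient.mk_eq_zero W).1 h

lemma isClosed_supp [IsNoetherianRing R] {N : Type u} [AddCommGroup N] [Module R N]
    (h : (associatedPrimes R N).Finite) : IsClosed (Module.support R N) := by
  have : Module.support R N = ⋃ I ∈ associatedPrimes R N, PrimeSpectrum.zeroLocus (I : Set R) := by
    ext p
    simp only [Set.mem_iUnion, PrimeSpectrum.mem_zeroLocus, SetLike.coe_subset_coe]
    constructor
    · intro hp
      obtain ⟨m, hm⟩ := Module.mem_support_iff_exists_annihilator.1 hp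
      have : (R ∙ m).annihilator ≤ p.asIdeal := hm
      obtain ⟨q, hq, hqp⟩ := Ideal.exists_minimalPrimes_le this
      have hq2 := Module.associatedPrimes.minimalPrimes_annihilator_subset_associatedPrimes R (R ∙ m) hq
      exact ⟨q, associatedPrimes.subset_of_injective (Submodule.subtype_injective _) hq2, hqp⟩
    · rintro ⟨I, hI, hle⟩
      obtain ⟨hI1, x, hx⟩ := isAssociatedPrime_iff.1 hI
      rw [Module.mem_support_iff']
      refine ⟨x, fun r hr h => hr (hle ?_)⟩
      rw [hx, Submodule.mem_colon_singleton]
      simpa using h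
  rw [this]
  exact h.isClosed_biUnion fun I _ => PrimeSpectrum.isClosed_zeroLocus _

lemma wl_step [IsNoetherianRing R] {N : Type u} [AddCommGroup N] [Module R N]
    (W : Submodule R N) (hW : W.FG) (T : Finset (N × PrimeSpectrum R))
    (hT : ∀ z ∈ T, ∀ r, r • z.1 ∈ W ↔ r ∈ z.2.asIdeal) (p : PrimeSpectrum R)
    (hp : ∀ z ∈ T, ¬ z.2 ≤ p) (hX : ∀ U : Submodule R N, U.FG → p ∈ Module.support R (N ⧸ U)) :
    ∃ W' : Submodule R N, W'.FG ∧ W ≤ W' ∧ (∀ z ∈ T, ∀ r, r • z.1 ∈ W' ↔ r ∈ z.2.asIdeal) ∧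
      ∃ y, ∀ r, r • y ∈ W' ↔ r ∈ p.asIdeal := by
  classical
  obtain ⟨U, hUdef⟩ : ∃ U, U = W ⊔ Submodule.span R ((T.image Prod.fst : Finset N) : Set N) := ⟨_, rfl⟩
  have hU : U.FG := hUdef ▸ hW.sup (Submodule.fg_span (Finset.finite_toSet _))
  obtain ⟨y, hy⟩ := (mem_supp_quot U p).1 (hX U hU)
  obtain ⟨V, hVdef⟩ : ∃ V, V = U ⊔ Submodule.span R {y} := ⟨_, rfl⟩
  have hV : V.FG := hVdef ▸ hU.sup (Submodule.fg_span_singleton _)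
  let J : Ideal R := ∏ z ∈ T, z.2.asIdeal
  have hJU : J • U ≤ W := by
    rw [hUdef, Submodule.smul_sup]
    refine sup_le Submodule.smul_le_right ?_
    rw [Submodule.smul_le]
    intro r hr n hn
    induction hn using Submodule.span_induction with
    | mem x hx =>
      obtain ⟨z, hz, rfl⟩ := Finset.mem_image.1 (Finset.mem_coe.1 hx)
      exact (hT z hz r).2 (Ideal.le_of_dvd (Finset.dvd_prod_of_mem _ hz) hr)
    | zero => rw [smul_zero]; exact Submodule.zero_mem _
    | add x y _ _ hx hy => rw [smul_add]; exact Submodule.add_mem _ hx hy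
    | smul c x _ hx => rw [smul_comm]; exact Submodule.smul_mem _ _ hx
  have hJp : ¬ J ≤ p.asIdeal := by
    rw [Ideal.IsPrime.prod_le p.2]
    rintro ⟨z, hz, h⟩
    exact hp z hz h
  obtain ⟨n, hn⟩ : ∃ n : ℕ, J ^ n • V ⊓ U ≤ W := by
    have : Module.Finite R V := Module.Finite.iff_fg.2 hV
    obtain ⟨k, hk⟩ := Ideal.exists_pow_inf_eq_pow_smul J (U.comap V.subtype)
    refine ⟨k + 1, ?_⟩
    have h1 := hk (k + 1) (Nat.le_succ k)
    rw [Nat.add_sub_cancel_left, pow_one] at h1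
    rintro z ⟨hz1, hz2⟩
    have hzV : z ∈ V := Submodule.smul_le_right hz1
    have h2 : (⟨z, hzV⟩ : V) ∈ J ^ (k + 1) • (⊤ : Submodule R V) ⊓ U.comap V.subtype := by
      refine ⟨?_, hz2⟩
      have : J ^ (k + 1) • V = (J ^ (k + 1) • (⊤ : Submodule R V)).map V.subtype := by
        rw [Submodule.map_smul'', Submodule.map_top, Submodule.range_subtype]
      have hz1 : z ∈ J ^ (k + 1) • V := hz1
      rw [this] at hz1
      obtain ⟨w, hw, rfl⟩ := hz1
      exact hw
    rw [h1] at h2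
    have h3 := Submodule.mem_map_of_mem (f := V.subtype) h2
    rw [Submodule.map_smul''] at h3
    refine hJU (Submodule.smul_mono le_rfl ?_ h3)
    rintro _ ⟨w, hw, rfl⟩
    exact hw.2
  obtain ⟨c, hc, hcp⟩ : ∃ c ∈ J ^ n, c ∉ p.asIdeal := by
    by_contra! h
    exact hJp (p.2.le_of_pow_le h)
  let W' := W ⊔ (J ^ n * p.asIdeal) • V
  have hWU : W ≤ U := hUdef ▸ le_sup_left
  have hUV : U ≤ V := hVdef ▸ le_sup_left
  have hWV : W' ≤ V := sup_le (hWU.trans hUV) Submodule.smul_le_right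
  refine ⟨W', ?_, le_sup_left, ?_, c • y, ?_⟩
  · exact hW.sup (Submodule.FG.smul (IsNoetherian.noetherian _) hV)
  · intro z hz r
    rw [← hT z hz r]
    refine ⟨fun h => ?_, fun h => Submodule.mem_sup_left h⟩
    have hzU : r • z.1 ∈ U := Submodule.smul_mem _ _ (hUdef ▸ Submodule.mem_sup_right
      (Submodule.subset_span (Finset.mem_coe.2 (Finset.mem_image_of_mem _ hz))))
    obtain ⟨w, hw, v, hv, hwv⟩ := Submodule.mem_sup.1 h
    have hv' : v ∈ J ^ n • V :=
      (Submodule.smul_mono_left (Ideal.mul_le_left : J ^ n * p.asIdeal ≤ J ^ n)) hv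
    rw [← hwv]
    refine Submodule.add_mem _ hw (hn (Submodule.mem_inf.2 ⟨hv', ?_⟩))
    have : v = r • z.1 - w := by rw [← hwv]; abel
    rw [this]
    exact Submodule.sub_mem _ hzU (hWU hw)
  · intro r
    have hyV : y ∈ V := hVdef ▸ Submodule.mem_sup_right (Submodule.mem_span_singleton_self y)
    constructor
    · intro h
      obtain ⟨w, hw, v, hv, hwv⟩ := Submodule.mem_sup.1 h
      have hv2 : v ∈ U ⊔ (p.asIdeal) • Submodule.span R {y} := by
        have : (J ^ n * p.asIdeal) • V ≤ U ⊔ (p.asIdeal) • Submodule.span R {y} := by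
          rw [hVdef, Submodule.smul_sup]
          exact sup_le_sup Submodule.smul_le_right (Submodule.smul_mono_left Ideal.mul_le_right)
        exact this hv
      obtain ⟨u, hu, v', hv', rfl⟩ := Submodule.mem_sup.1 hv2
      obtain ⟨s, hs, rfl⟩ := Submodule.mem_smul_span_singleton.1 hv'
      have h1 : (r * c - s) • y ∈ U := by
        have : (r * c - s) • y = w + u := by
          rw [sub_smul, mul_smul, ← hwv]; abel
        rw [this]
        exact Submodule.add_mem _ (hWU hw) hu
      have h2 := hy _ h1
      have h3 : r * c ∈ p.asIdeal := by
        have := Ideal.add_mem _ h2 hs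
        simpa using this
      exact (p.2.mem_or_mem h3).resolve_right hcp
    · intro h
      refine Submodule.mem_sup_right ?_
      rw [smul_smul, mul_comm r c]
      exact Submodule.smul_mem_smul (Ideal.mul_mem_mul hc h) hyV

lemma wl_fsf [IsNoetherianRing R] {N : Type u} [AddCommGroup N] [Module R N]
    (h : IsWeaklyLaskerian R N) :
    ∃ L : Submodule R N, L.FG ∧ (Module.support R (N ⧸ L)).Finite := by
  classical
  by_contra! hcon
  have wf : WellFounded ((· < ·) : TopologicalSpace.Closeds (PrimeSpectrum R) → _ → Prop) :=
    wellFounded_lt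
  let cl : Submodule R N → TopologicalSpace.Closeds (PrimeSpectrum R) := fun W =>
    ⟨Module.support R (N ⧸ W), isClosed_supp (h W)⟩
  obtain ⟨X, ⟨W0, hW0, rfl⟩, hXmin⟩ := wf.has_min (cl '' {W | W.FG}) ⟨_, ⊥, Submodule.fg_bot, rfl⟩
  have hanti : ∀ W W', W ≤ W' → cl W' ≤ cl W := by
    intro W W' hle p hp
    obtain ⟨y, hy⟩ := (mem_supp_quot _ _).1 hp
    exact (mem_supp_quot _ _).2 ⟨y, fun r hr => hy r (hle hr)⟩
  have hX : ∀ U : Submodule R N, U.FG → cl W0 ≤ cl U := by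
    intro U hU
    have h1 := hanti _ _ (le_sup_left : W0 ≤ W0 ⊔ U)
    have h2 := hXmin _ ⟨W0 ⊔ U, Submodule.FG.sup hW0 hU, rfl⟩
    have h3 : cl (W0 ⊔ U) = cl W0 := eq_of_le_of_not_lt h1 h2
    rw [← h3]
    exact hanti _ _ le_sup_right
  obtain ⟨Y, ⟨hYX, hYinf⟩, hYmin⟩ := wf.has_min {Y | Y ≤ cl W0 ∧ (Y : Set (PrimeSpectrum R)).Infinite}
    ⟨_, le_rfl, hcon W0 hW0⟩
  let V : PrimeSpectrum R → Set (PrimeSpectrum R) := fun p => {p' | p ≤ p'}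
  let Y' : Set (PrimeSpectrum R) := {p ∈ (Y : Set _) | V p ≠ Y}
  have hV : ∀ p, V p = closure {p} := by
    intro p
    ext p'
    rw [← specializes_iff_mem_closure, ← PrimeSpectrum.le_iff_specializes]
    rfl
  have hVfin : ∀ p ∈ Y', (V p).Finite := by
    rintro p ⟨hp, hpY⟩
    by_contra hinf
    have hle : V p ⊆ Y := by
      rw [hV]
      exact closure_minimal (Set.singleton_subset_iff.2 hp) Y.isClosed
    refine hYmin ⟨V p, by rw [hV]; exact isClosed_closure⟩ ⟨le_trans hle hYX, hinf⟩ ?_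
    exact lt_of_le_of_ne hle fun h => hpY (congrArg SetLike.coe h)
  have hY'inf : Y'.Infinite := by
    intro hfin
    apply hYinf
    have hsub : {p | V p = Y}.Subsingleton := by
      intro p hp q hq
      have hp : V p = Y := hp
      have hq : V q = Y := hq
      have h1 : q ∈ V p := by rw [hp, ← hq]; exact le_refl q
      have h2 : p ∈ V q := by rw [hq, ← hp]; exact le_refl p
      exact le_antisymm h1 h2
    refine (hfin.union hsub.finite).subset fun p hp => ?_
    by_cases hpV : V p = Y
    · exact Or.inr hpV
    · exact Or.inl ⟨hp, hpV⟩
  let St := {σ : Submodule R N × Finset (N × PrimeSpectrum R) // σ.1.FG ∧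
    (∀ z ∈ σ.2, z.2 ∈ Y') ∧ ∀ z ∈ σ.2, ∀ r, r • z.1 ∈ σ.1 ↔ r ∈ z.2.asIdeal}
  have step : ∀ σ : St, ∃ τ : St, σ.1.1 ≤ τ.1.1 ∧ σ.1.2 ⊆ τ.1.2 ∧
      (σ.1.2.image Prod.snd).card < (τ.1.2.image Prod.snd).card := by
    rintro ⟨⟨W, T⟩, hW, hTY, hT⟩
    have hfin : (⋃ z ∈ T, V z.2).Finite :=
      Set.Finite.biUnion (Finset.finite_toSet T) fun z hz => hVfin _ (hTY z hz)
    obtain ⟨p, hpY, hp⟩ := (hY'inf.sdiff hfin).nonempty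
    have hp : ∀ z ∈ T, ¬ z.2 ≤ p := fun z hz hle => hp (Set.mem_biUnion hz hle)
    obtain ⟨W', hW', hle, hT', y, hy⟩ := wl_step W hW T hT p hp
      (fun U hU => hX U hU (hYX hpY.1))
    refine ⟨⟨⟨W', insert (y, p) T⟩, hW', ?_, ?_⟩, hle, Finset.subset_insert _ _, ?_⟩
    · intro z hz
      rcases Finset.mem_insert.1 hz with rfl | hz
      exacts [hpY, hTY z hz]
    · intro z hz
      rcases Finset.mem_insert.1 hz with rfl | hz
      exacts [hy, hT' z hz]
    · show (T.image Prod.snd).card < ((insert (y, p) T).image Prod.snd).card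
      rw [Finset.image_insert, Finset.card_insert_of_notMem]
      · exact Nat.lt_succ_self _
      · intro hmem
        obtain ⟨z, hz, hzp⟩ := Finset.mem_image.1 hmem
        exact hp z hz hzp.le
  choose nxt hn1 hn2 hn3 using step
  let σ : ℕ → St := fun n => Nat.rec ⟨⟨⊥, ∅⟩, Submodule.fg_bot, by simp, by simp⟩
    (fun _ τ => nxt τ) n
  have hm1 : Monotone fun n => (σ n).1.1 := monotone_nat_of_le_succ fun n => hn1 (σ n)
  have hm2 : Monotone fun n => (σ n).1.2 := monotone_nat_of_le_succ fun n => hn2 (σ n)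
  have hcard : ∀ n, n ≤ ((σ n).1.2.image Prod.snd).card := by
    intro n
    induction n with
    | zero => exact Nat.zero_le _
    | succ n ih => exact lt_of_le_of_lt ih (hn3 (σ n))
  let Winf : Submodule R N := ⨆ n, (σ n).1.1
  have hmem : ∀ x, x ∈ Winf ↔ ∃ n, x ∈ (σ n).1.1 := fun x =>
    Submodule.mem_iSup_of_directed _ hm1.directed_le
  have hass : ∀ n, ∀ z ∈ (σ n).1.2, z.2.asIdeal ∈ associatedPrimes R (N ⧸ Winf) := by
    intro n z hz
    refine isAssociatedPrime_iff.2 ⟨z.2.2, Winf.mkQ z.1, ?_⟩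
    ext r
    rw [Submodule.mem_colon_singleton, ← map_smul, Submodule.mem_bot, Submodule.mkQ_apply,
      Submodule.Quotient.mk_eq_zero, hmem]
    constructor
    · intro hr
      exact ⟨n, ((σ n).2.2.2 z hz r).2 hr⟩
    · rintro ⟨m, hm⟩
      exact ((σ (max n m)).2.2.2 z (hm2 (le_max_left _ _) hz) r).1 (hm1 (le_max_right n m) hm)
  have hfin := h Winf
  have hfin2 : {p : PrimeSpectrum R | p.asIdeal ∈ associatedPrimes R (N ⧸ Winf)}.Finite :=
    hfin.preimage (fun p _ q _ hpq => PrimeSpectrum.ext hpq)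
  have := hcard (hfin2.toFinset.card + 1)
  have h2 : ((σ (hfin2.toFinset.card + 1)).1.2.image Prod.snd) ⊆ hfin2.toFinset := by
    intro p hp
    obtain ⟨z, hz, rfl⟩ := Finset.mem_image.1 hp
    exact hfin2.mem_toFinset.2 (hass (hfin2.toFinset.card + 1) z hz)
  have := Finset.card_le_card h2
  omega

end Part3

section Part4

variable {R}

lemma isArtinian_of_supp {S : Type u} [CommRing S] [IsNoetherianRing S] {N : Type u}
    [AddCommGroup N] [Module S N] (hN : Module.Finite S N)
    (h : ∀ p ∈ Module.support S N, p.asIdeal.IsMaximal) : IsArtinian S N := by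
  revert h
  induction hN using IsNoetherianRing.induction_on_isQuotientEquivQuotientPrime with
  | subsingleton N => intro _; infer_instance
  | quotient N p e =>
    intro h
    have hp : p.asIdeal.IsMaximal := by
      apply h p
      rw [e.support_eq]
      refine (mem_supp_quot p.asIdeal p).2 ⟨1, fun r hr => ?_⟩
      simpa using hr
    have h1 : IsSimpleModule S (S ⧸ p.1) := isSimpleModule_iff_isCoatom.2 hp.out
    exact LinearEquiv.isArtinian_iff e |>.2 inferInstance
  | exact N1 N2 N3 f g hf hg hfg ih1 ih3 =>
    intro h
    have i1 := ih1 fun p hp => h p (Module.support_subset_of_injective f hf hp)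
    have i3 := ih3 fun p hp => h p (Module.support_subset_of_surjective g hg hp)
    exact isArtinian_of_range_eq_ker f g (LinearMap.exact_iff.1 hfg).symm

lemma infinite_primes [IsNoetherianRing R] {q p m : PrimeSpectrum R} (h1 : q < p) (h2 : p < m) :
    {P : PrimeSpectrum R | q ≤ P}.Infinite := by
  intro hfin
  have hfin' : {P : PrimeSpectrum R | q ≤ P ∧ ¬ m ≤ P}.Finite := hfin.subset fun P hP => hP.1
  have hx : ∃ x ∈ m.asIdeal, ∀ P ∈ hfin'.toFinset, x ∉ P.asIdeal := by
    by_contra! hcon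
    have : (m.asIdeal : Set R) ⊆ ⋃ i ∈ (↑hfin'.toFinset : Set (PrimeSpectrum R)), i.asIdeal := by
      intro x hx
      obtain ⟨P, hP, hxP⟩ := hcon x hx
      exact Set.mem_biUnion (Finset.mem_coe.2 hP) hxP
    rw [Ideal.subset_union_prime q q (fun P _ _ _ => P.2)] at this
    obtain ⟨P, hP, hle⟩ := this
    exact (hfin'.mem_toFinset.1 hP).2 hle
  obtain ⟨x, hxm, hx⟩ := hx
  have hle : Ideal.span (insert x (q.asIdeal : Set R)) ≤ m.asIdeal := by
    rw [Ideal.span_le]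
    rintro y (rfl | hy)
    exacts [hxm, (h1.trans h2).le hy]
  obtain ⟨P, hP, hPm⟩ := Ideal.exists_minimalPrimes_le hle
  have hqP : q.asIdeal ≤ P := fun y hy => hP.1.2 (Ideal.subset_span (Or.inr hy))
  have hmP : m.asIdeal = P := by
    refine le_antisymm ?_ hPm
    by_contra hcon
    exact hx ⟨P, hP.1.1⟩ (hfin'.mem_toFinset.2 ⟨hqP, hcon⟩)
      (hP.1.2 (Ideal.subset_span (Or.inl rfl)))
  have := Ideal.mem_minimalPrimes_span_of_mem_minimalPrimes_span_insert (q := p.asIdeal)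
    (p := P) (hmP ▸ h2) x (q.asIdeal : Set R) hP (q.asIdeal : Set R) h1.le
    (fun y hy => Ideal.le_radical (Ideal.subset_span (Or.inr hy)))
  rw [Ideal.span_eq] at this
  exact h1.not_ge (this.2 ⟨q.2, le_rfl⟩ h1.le)

lemma eq_of_nonmax [IsNoetherianRing R] {N : Type u} [AddCommGroup N] [Module R N]
    (h : (Module.support R N).Finite) {p q : PrimeSpectrum R} (hp : ¬ p.asIdeal.IsMaximal)
    (hq : q ∈ Module.support R N) (hqp : q ≤ p) : q = p := by
  by_contra hne
  obtain ⟨m, hm, hpm⟩ := Ideal.exists_le_maximal p.asIdeal p.2.ne_top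
  refine infinite_primes (q := q) (p := p) (m := ⟨m, hm.isPrime⟩) (lt_of_le_of_ne hqp hne)
    (lt_of_le_of_ne hpm ?_) (h.subset fun P hP => Module.mem_support_mono hP hq)
  rintro rfl
  exact hp hm

lemma local_primes [IsNoetherianRing R] {a : Ideal R} {N : Type u} [AddCommGroup N] [Module R N]
    (ht : ∀ x ∈ a, ∀ d : N, ∃ k : ℕ, x ^ k • d = 0)
    (hf : Module.Finite R (Submodule.torsionBySet R N (a : Set R)))
    (p : PrimeSpectrum R) (hp : ∀ q ∈ Module.support R N, q ≤ p → q = p) :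
    ∃ Q : Set (Ideal R), Q.Finite ∧ (∀ q ∈ Q, q.IsPrime ∧ ¬ a ≤ q) ∧
      ∀ x ∈ a, (∀ q ∈ Q, x ∉ q) → ∃ F : Submodule R N, F.FG ∧ ∀ z : N, ∃ s ∉ p.asIdeal,
        ∃ f ∈ F, ∃ w, s • z = f + x • w := by
  classical
  let S := Localization.AtPrime p.asIdeal
  let A := LocalizedModule p.asIdeal.primeCompl N
  let φ : N →ₗ[R] A := LocalizedModule.mkLinearMap p.asIdeal.primeCompl N
  have hS : IsNoetherianRing S := IsLocalization.isNoetherianRing p.asIdeal.primeCompl S inferInstance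
  obtain ⟨g, hg⟩ : a.FG := IsNoetherian.noetherian a
  have hgmem : ∀ y ∈ g, y ∈ a := fun y hy => hg ▸ Ideal.subset_span hy
  have hmap : a.map (algebraMap R S) = Ideal.span ((g.image (algebraMap R S) : Finset S) : Set S) := by
    rw [← hg, Ideal.map_span, Finset.coe_image]
  have hsurj : ∀ z : A, ∃ s ∉ p.asIdeal, ∃ n : N, s • z = φ n := by
    intro z
    obtain ⟨⟨n, s⟩, h⟩ := IsLocalizedModule.surj p.asIdeal.primeCompl φ z
    exact ⟨s.1, s.2, n, h⟩
  have hker : ∀ n : N, φ n = 0 → ∃ s ∉ p.asIdeal, s • n = 0 := by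
    intro n hn
    obtain ⟨s, hs⟩ := (IsLocalizedModule.eq_zero_iff p.asIdeal.primeCompl φ).1 hn
    exact ⟨s.1, s.2, hs⟩
  have hunit : ∀ s ∉ p.asIdeal, IsUnit (algebraMap R S s) := fun s hs =>
    IsLocalization.map_units S (⟨s, hs⟩ : p.asIdeal.primeCompl)
  have hsm : ∀ (r : R) (z : A), r • z = algebraMap R S r • z := fun r z =>
    (algebraMap_smul S r z).symm
  -- torsion
  let tA := Submodule.torsionBySet S A ((a.map (algebraMap R S) : Ideal S) : Set S)
  let tN := Submodule.torsionBySet R N (a : Set R)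
  have htA : tA ≤ Submodule.span S (tN.map φ : Submodule R A) := by
    intro z hz
    obtain ⟨s, hs, n, hn⟩ := hsurj z
    have h1 : ∀ y ∈ g, ∃ s ∉ p.asIdeal, s • y • n = 0 := by
      intro y hy
      apply hker
      rw [map_smul, ← hn, smul_comm, hsm y]
      have := (Submodule.mem_torsionBySet_iff _ _).1 hz
        ⟨algebraMap R S y, Ideal.mem_map_of_mem _ (hgmem y hy)⟩
      rw [show algebraMap R S y • z = 0 from this, smul_zero]
    choose! u hu hun using h1
    let U := ∏ y ∈ g, u y
    have hU : U ∉ p.asIdeal := by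
      intro h
      obtain ⟨y, hy, h⟩ := (p.2.prod_mem_iff).1 h
      exact hu y hy h
    have hUn : U • n ∈ tN := by
      show _ ∈ Submodule.torsionBySet R N (a : Set R)
      rw [show (a : Set R) = (Ideal.span (g : Set R) : Ideal R) from by rw [← hg],
        ← Submodule.torsionBySet_eq_torsionBySet_span, Submodule.mem_torsionBySet_iff]
      rintro ⟨y, hy⟩
      show y • U • n = 0
      rw [smul_comm]
      obtain ⟨c, hc⟩ := Finset.dvd_prod_of_mem u hy
      rw [show U = c * u y by rw [mul_comm]; exact hc, mul_smul, hun y hy, smul_zero]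
    have h2 : algebraMap R S (U * s) • z ∈ Submodule.span S (tN.map φ : Set A) := by
      rw [← hsm, mul_smul, hn, ← map_smul]
      exact Submodule.subset_span (Submodule.mem_map_of_mem hUn)
    have h3 : U * s ∉ p.asIdeal := fun h => (p.2.mem_or_mem h).elim hU hs
    obtain ⟨v, hv⟩ := hunit _ h3
    have := Submodule.smul_mem _ (↑v⁻¹ : S) h2
    rwa [← hv, smul_smul, Units.inv_mul, one_smul] at this
  have hfgN : tN.FG := Module.Finite.iff_fg.1 hf
  have hspanfg : (Submodule.span S (tN.map φ : Set A)).FG := by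
    obtain ⟨t, ht⟩ := hfgN.map φ
    rw [← ht, Submodule.span_span_of_tower]
    exact Submodule.fg_span t.finite_toSet
  have : Module.Finite S (Submodule.span S (tN.map φ : Set A)) := Module.Finite.iff_fg.2 hspanfg
  have : IsNoetherian S (Submodule.span S (tN.map φ : Set A)) := inferInstance
  have : IsNoetherian S tA := isNoetherian_of_le htA
  have htAfin : Module.Finite S tA := inferInstance
  have hart : IsArtinian S tA := by
    apply isArtinian_of_supp htAfin
    intro P hP
    obtain ⟨z, hz⟩ := Module.mem_support_iff'.1 hP
    obtain ⟨s, hs, n, hn⟩ := hsurj z.1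
    have h1 : PrimeSpectrum.comap (algebraMap R S) P ∈ Module.support R N := by
      rw [Module.mem_support_iff']
      refine ⟨n, fun r hr h => hz (algebraMap R S (r * s)) ?_ (Subtype.ext ?_)⟩
      · intro h
        rw [map_mul] at h
        rcases P.2.mem_or_mem h with h | h
        · exact hr h
        · exact P.2.ne_top (Ideal.eq_top_of_isUnit_mem _ h (hunit s hs))
      · show algebraMap R S (r * s) • z.1 = 0
        rw [← hsm, mul_smul, hn, ← map_smul, h, map_zero]
    have h2 : PrimeSpectrum.comap (algebraMap R S) P ≤ p := by
      intro r hr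
      by_contra hrp
      exact P.2.ne_top (Ideal.eq_top_of_isUnit_mem _ hr (hunit r hrp))
    have h3 := hp _ h1 h2
    have h4 : P.asIdeal = IsLocalRing.maximalIdeal S := by
      have h5 := IsLocalization.map_under p.asIdeal.primeCompl S P.asIdeal
      have h6 : P.asIdeal.under R = p.asIdeal := congrArg PrimeSpectrum.asIdeal h3
      rw [h6] at h5
      rw [← h5]
      exact Localization.AtPrime.map_eq_maximalIdeal
    rw [h4]
    infer_instance
  have hA : IsArtinian S A := by
    apply isArtinian_of_torsion (g.image (algebraMap R S))
    · intro x hx z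
      obtain ⟨y, hy, rfl⟩ := Finset.mem_image.1 hx
      obtain ⟨s, hs, n, hn⟩ := hsurj z
      obtain ⟨k, hk⟩ := ht y (hgmem y hy) n
      refine ⟨k, ?_⟩
      obtain ⟨v, hv⟩ := hunit s hs
      have : (v : S) • (algebraMap R S y) ^ k • z = 0 := by
        rw [hv, ← map_pow, ← hsm, ← hsm, smul_comm, hn, ← map_smul, hk, map_zero]
      have := congrArg (fun t => (↑v⁻¹ : S) • t) this
      simpa [smul_smul] using this
    · rw [Submodule.torsionBySet_eq_torsionBySet_span, ← hmap]
      exact hart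
  obtain ⟨Q, hQ1, hQ2, hQ3⟩ := exists_primes (b := a.map (algebraMap R S)) (A := A) htAfin
  refine ⟨(fun q => q.comap (algebraMap R S)) '' Q, hQ1.image _, ?_, ?_⟩
  · rintro _ ⟨q, hq, rfl⟩
    have := (hQ2 q hq).1
    exact ⟨inferInstance, fun h => (hQ2 q hq).2 (Ideal.map_le_iff_le_comap.2 h)⟩
  · intro x hx hxQ
    obtain ⟨F, ⟨t, rfl⟩, hF⟩ := hQ3 (algebraMap R S x) (Ideal.mem_map_of_mem _ hx)
      (fun q hq h => hxQ _ ⟨q, hq, rfl⟩ h)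
    choose u hu ν hν using hsurj
    refine ⟨Submodule.span R (ν '' t), Submodule.fg_span (t.finite_toSet.image _), ?_⟩
    have hmem : ∀ f ∈ Submodule.span S (t : Set A), ∃ s ∉ p.asIdeal,
        ∃ n ∈ Submodule.span R (ν '' t), s • f = φ n := by
      intro f hf
      induction hf using Submodule.span_induction with
      | mem f hf => exact ⟨u f, hu f, ν f, Submodule.subset_span ⟨f, hf, rfl⟩, hν f⟩
      | zero => exact ⟨1, p.2.one_notMem, 0, Submodule.zero_mem _, by simp⟩
      | add f f' _ _ h h' =>
        obtain ⟨s, hs, n, hn, h⟩ := h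
        obtain ⟨s', hs', n', hn', h'⟩ := h'
        refine ⟨s * s', fun hh => (p.2.mem_or_mem hh).elim hs hs', s' • n + s • n',
          Submodule.add_mem _ (Submodule.smul_mem _ _ hn) (Submodule.smul_mem _ _ hn'), ?_⟩
        rw [smul_add, map_add, map_smul, map_smul, ← h, ← h', smul_smul, smul_smul, mul_comm s' s]
      | smul c f _ h =>
        obtain ⟨s, hs, n, hn, h⟩ := h
        obtain ⟨⟨r, s'⟩, hr⟩ := IsLocalization.surj p.asIdeal.primeCompl c
        refine ⟨s'.1 * s, fun hh => (p.2.mem_or_mem hh).elim s'.2 hs, r • n,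
          Submodule.smul_mem _ _ hn, ?_⟩
        rw [map_smul, ← h, mul_smul, hsm s'.1, hsm s, hsm r, hsm s, ← hr, smul_smul, smul_smul,
          smul_smul]
        congr 1
        ring
    intro z
    obtain ⟨f, hf, w, hw⟩ := hF (φ z)
    obtain ⟨s, hs, n, hn, h⟩ := hmem f hf
    have h1 : φ ((s * u w) • z - u w • n - (s * x) • ν w) = 0 := by
      rw [map_sub, map_sub, map_smul, map_smul, map_smul, ← h, ← hν, hw, ← hsm, smul_add,
        smul_smul, smul_smul, smul_smul]
      rw [show s * u w * x = s * x * u w by ring, mul_comm s (u w)]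
      abel
    obtain ⟨s', hs', h2⟩ := hker _ h1
    refine ⟨s' * (s * u w), fun hh => (p.2.mem_or_mem hh).elim hs' fun hh =>
      (p.2.mem_or_mem hh).elim hs (hu w), (s' * u w) • n, Submodule.smul_mem _ _ hn,
      (s' * s) • ν w, ?_⟩
    rw [smul_sub, smul_sub, smul_smul, smul_smul, smul_smul, sub_sub, sub_eq_zero] at h2
    rw [h2, smul_smul]
    congr 2
    ring

lemma FE.zero_of_injective [IsNoetherianRing R] {a : Ideal R} {A B : Type u} [AddCommGroup A]
    [Module R A] [AddCommGroup B] [Module R B] (f : A →ₗ[R] B) (hf : Function.Injective f)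
    (h : FE a B 0) : FE a A 0 := by
  rw [FE.zero_iff] at h ⊢
  have := isNoetherian_of_isNoetherianRing_of_finite R (Submodule.torsionBySet R B (a : Set R))
  let g : Submodule.torsionBySet R A (a : Set R) →ₗ[R] Submodule.torsionBySet R B (a : Set R) :=
    LinearMap.restrict f (by
      intro x hx
      rw [Submodule.mem_torsionBySet_iff] at hx ⊢
      intro r
      rw [← map_smul, hx r, map_zero])
  exact Module.Finite.of_injective g fun x y hxy => Subtype.ext (hf (Subtype.ext_iff.1 hxy))

/-- `0 :_(0 :_N b) x` is `0 :_N (b + x)`. -/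
noncomputable def torsionEquiv (N : Type u) [AddCommGroup N] [Module R N] (b : Ideal R) (x : R) :
    LinearMap.ker (LinearMap.lsmul R (Submodule.torsionBySet R N (b : Set R)) x) ≃ₗ[R]
      Submodule.torsionBySet R N ((b ⊔ Ideal.span {x} : Ideal R) : Set R) :=
  LinearEquiv.ofBijective
    (LinearMap.codRestrict _ ((Submodule.subtype _).comp (Submodule.subtype _)) (by
      intro z
      rw [Submodule.mem_torsionBySet_iff]
      rintro ⟨r, hr⟩
      obtain ⟨y, hy, w, hw, rfl⟩ := Submodule.mem_sup.1 hr
      obtain ⟨c, rfl⟩ := Ideal.mem_span_singleton'.1 hw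
      have h1 := (Submodule.mem_torsionBySet_iff _ _).1 z.1.2 ⟨y, hy⟩
      have h2 : x • z.1.1 = 0 := Subtype.ext_iff.1 (LinearMap.mem_ker.1 z.2)
      show (y + c * x) • z.1.1 = 0
      rw [add_smul, mul_smul, h2, smul_zero, add_zero]
      exact h1))
    ⟨fun z w hzw => Subtype.ext (Subtype.ext (by
        have := Subtype.ext_iff.1 hzw
        exact this)),
      fun z => by
        have hz := (Submodule.mem_torsionBySet_iff _ _).1 z.2
        refine ⟨⟨⟨z.1, (Submodule.mem_torsionBySet_iff _ _).2 fun r =>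
          hz ⟨r.1, Ideal.mem_sup_left r.2⟩⟩, Subtype.ext ?_⟩, rfl⟩
        exact hz ⟨x, Ideal.mem_sup_right (Ideal.mem_span_singleton_self x)⟩⟩

lemma good_of_finite_supp_step [IsNoetherianRing R] {a : Ideal R} {N : Type u} [AddCommGroup N]
    [Module R N] (ht : ∀ x ∈ a, ∀ d : N, ∃ k : ℕ, x ^ k • d = 0) (h0 : FE a N 0) (h1 : FE a N 1)
    (hs : (Module.support R N).Finite) :
    ∃ Q : Set (Ideal R), Q.Finite ∧ (∀ q ∈ Q, q.IsPrime ∧ ¬ a ≤ q) ∧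
      ∀ x ∈ a, (∀ q ∈ Q, x ∉ q) → Good a (LinearMap.ker (LinearMap.lsmul R N x)) → Good a N := by
  have hQ : ∀ p : PrimeSpectrum R, ¬ p.asIdeal.IsMaximal →
    ∃ Q : Set (Ideal R), Q.Finite ∧ (∀ q ∈ Q, q.IsPrime ∧ ¬ a ≤ q) ∧
      ∀ x ∈ a, (∀ q ∈ Q, x ∉ q) → ∃ F : Submodule R N, F.FG ∧ ∀ z : N, ∃ s ∉ p.asIdeal,
        ∃ f ∈ F, ∃ w, s • z = f + x • w := fun p hp =>
    local_primes ht ((FE.zero_iff a N).1 h0) p fun q hq hqp => eq_of_nonmax hs hp hq hqp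
  choose! Q hQ1 hQ2 hQ3 using hQ
  have hfin : {p ∈ Module.support R N | ¬ p.asIdeal.IsMaximal}.Finite :=
    hs.subset fun p hp => hp.1
  refine ⟨⋃ p ∈ {p ∈ Module.support R N | ¬ p.asIdeal.IsMaximal}, Q p,
    hfin.biUnion fun p hp => hQ1 p hp.2, ?_, ?_⟩
  · intro q hq
    simp only [Set.mem_iUnion] at hq
    obtain ⟨p, hp, hq⟩ := hq
    exact hQ2 p hp.2 q hq
  intro x hx hxQ hK
  have hF : ∀ p : PrimeSpectrum R, p ∈ Module.support R N ∧ ¬ p.asIdeal.IsMaximal →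
      ∃ F : Submodule R N, F.FG ∧ ∀ z : N, ∃ s ∉ p.asIdeal,
        ∃ f ∈ F, ∃ w, s • z = f + x • w := fun p hp =>
    hQ3 p hp.2 x hx fun q hq => hxQ q (Set.mem_biUnion hp hq)
  choose! F hF1 hF2 using hF
  let L : Submodule R N := ⨆ p ∈ hfin.toFinset, F p
  have hL : L.FG := Submodule.fg_biSup _ _ fun p hp => hF1 p (hfin.mem_toFinset.1 hp)
  set φ := LinearMap.lsmul R N x with hφ
  have e1 := ker_range_exact φ
  have e2 : Function.Exact (LinearMap.range φ).subtype (LinearMap.range φ).mkQ :=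
    LinearMap.exact_subtype_mkQ _
  have hI1 : FE a (LinearMap.range φ) 1 := FE.right _ _ e1 (Submodule.subtype_injective _)
    (LinearMap.surjective_rangeRestrict _) h1 (hK 2)
  have hE0 : FE a (N ⧸ LinearMap.range φ) 0 := FE.right _ _ e2 (Submodule.subtype_injective _)
    (Submodule.mkQ_surjective _) h0 hI1
  let L' : Submodule R (N ⧸ LinearMap.range φ) := L.map (LinearMap.range φ).mkQ
  have hL' : Module.Finite R L' := Module.Finite.iff_fg.2 (hL.map _)
  have hgL' : Good a L' := Good.of_finite _ _
  have hD0 : FE a ((N ⧸ LinearMap.range φ) ⧸ L') 0 := FE.right _ _ (LinearMap.exact_subtype_mkQ L')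
    (Submodule.subtype_injective _) (Submodule.mkQ_surjective _) hE0 (hgL' 1)
  rw [FE.zero_iff] at hD0
  have hsurj : Function.Surjective (L'.mkQ.comp (LinearMap.range φ).mkQ) :=
    (Submodule.mkQ_surjective _).comp (Submodule.mkQ_surjective _)
  have hsupp : ∀ p ∈ Module.support R ((N ⧸ LinearMap.range φ) ⧸ L'), p.asIdeal.IsMaximal := by
    intro p hp
    by_contra hmax
    have hpN : p ∈ Module.support R N := Module.support_subset_of_surjective _ hsurj hp
    obtain ⟨y, hy⟩ := (mem_supp_quot L' p).1 hp
    obtain ⟨z, rfl⟩ := Submodule.mkQ_surjective _ y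
    obtain ⟨s, hs, f, hf, w, hw⟩ := hF2 p ⟨hpN, hmax⟩ z
    refine hs (hy s ?_)
    rw [← map_smul, hw, map_add]
    have : (LinearMap.range φ).mkQ (x • w) = 0 := by
      rw [Submodule.mkQ_apply, Submodule.Quotient.mk_eq_zero]
      exact ⟨w, rfl⟩
    rw [this, add_zero]
    refine Submodule.mem_map_of_mem ?_
    exact Submodule.mem_iSup_of_mem p
      (Submodule.mem_iSup_of_mem (hfin.mem_toFinset.2 ⟨hpN, hmax⟩) hf)
  have htor : IsArtinian R (Submodule.torsionBySet R ((N ⧸ LinearMap.range φ) ⧸ L') (a : Set R)) :=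
    isArtinian_of_supp hD0 fun p hp => hsupp p
      (Module.support_subset_of_injective _ (Submodule.subtype_injective _) hp)
  have hD : IsArtinian R ((N ⧸ LinearMap.range φ) ⧸ L') := by
    obtain ⟨g, hg⟩ : a.FG := IsNoetherian.noetherian a
    apply isArtinian_of_torsion g
    · intro y hy d
      obtain ⟨z, rfl⟩ := hsurj d
      obtain ⟨k, hk⟩ := ht y (hg ▸ Ideal.subset_span hy) z
      exact ⟨k, by rw [← map_smul, hk, map_zero]⟩
    · rw [Submodule.torsionBySet_eq_torsionBySet_span, show Ideal.span (g : Set R) = a from hg]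
      exact htor
  have hDg : Good a ((N ⧸ LinearMap.range φ) ⧸ L') := Good.of_isArtinian hD0
  have hEg : Good a (N ⧸ LinearMap.range φ) := Good.mid _ _ (LinearMap.exact_subtype_mkQ L')
    (Submodule.subtype_injective _) (Submodule.mkQ_surjective _) hgL' hDg
  exact Good.of_mul hx hK hEg

lemma good_of_finite_supp [IsNoetherianRing R] {a : Ideal R} {N : Type u} [AddCommGroup N]
    [Module R N] (ht : ∀ x ∈ a, ∀ d : N, ∃ k : ℕ, x ^ k • d = 0) (h0 : FE a N 0) (h1 : FE a N 1)
    (hs : (Module.support R N).Finite) : Good a N := by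
  classical
  by_contra hbad
  let P : Set (Ideal R) := {b | FE a (Submodule.torsionBySet R N (b : Set R)) 0 ∧
    FE a (Submodule.torsionBySet R N (b : Set R)) 1 ∧
    ¬ Good a (Submodule.torsionBySet R N (b : Set R))}
  have hbot : (⊥ : Ideal R) ∈ P := by
    have htop : Submodule.torsionBySet R N ((⊥ : Ideal R) : Set R) = ⊤ := by
      rw [eq_top_iff]
      intro z _
      rw [Submodule.mem_torsionBySet_iff]
      rintro ⟨r, hr⟩
      have : r = 0 := hr
      show r • z = 0
      rw [this, zero_smul]
    have e : N ≃ₗ[R] Submodule.torsionBySet R N ((⊥ : Ideal R) : Set R) :=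
      Submodule.topEquiv.symm.trans (LinearEquiv.ofEq _ _ htop.symm)
    exact ⟨h0.congr e, h1.congr e, fun h => hbad (h.congr e.symm)⟩
  obtain ⟨b, ⟨hb0, hb1, hb⟩, hmax⟩ := set_has_maximal_iff_noetherian.2
    (inferInstance : IsNoetherian R R) P ⟨_, hbot⟩
  have hab : ¬ a ≤ b := by
    intro hle
    apply hb
    have h2 := (FE.zero_iff a N).1 h0
    have := isNoetherian_of_isNoetherianRing_of_finite R (Submodule.torsionBySet R N (a : Set R))
    have := isNoetherian_of_le (Submodule.torsionBySet_le_torsionBySet_of_subset (R := R) (M := N)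
      (SetLike.coe_subset_coe.2 hle))
    exact Good.of_finite _ _
  obtain ⟨Q, hQ1, hQ2, hQ3⟩ := good_of_finite_supp_step (a := a)
    (N := Submodule.torsionBySet R N (b : Set R))
    (fun x hx d => (ht x hx d.1).imp fun k hk => Subtype.ext hk) hb0 hb1
    (hs.subset (Module.support_subset_of_injective _ (Submodule.subtype_injective _)))
  have hx : ∃ x ∈ a, x ∉ b ∧ ∀ q ∈ Q, x ∉ q := by
    by_contra! hcon
    have : (a : Set R) ⊆ ⋃ i ∈ (↑(insert b hQ1.toFinset) : Set (Ideal R)), (i : Set R) := by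
      intro x hx
      by_cases hxb : x ∈ b
      · exact Set.mem_biUnion (by simp) hxb
      · obtain ⟨q, hq, hxq⟩ := hcon x hx hxb
        exact Set.mem_biUnion (by simp [hq]) hxq
    rw [Ideal.subset_union_prime (f := fun i => i) b b (fun P hP hPb _ => by
      rcases Finset.mem_insert.1 hP with h | h
      · exact absurd h hPb
      · exact (hQ2 P (hQ1.mem_toFinset.1 h)).1)] at this
    obtain ⟨q, hq, hle⟩ := this
    rcases Finset.mem_insert.1 hq with rfl | h
    · exact hab hle
    · exact (hQ2 q (hQ1.mem_toFinset.1 h)).2 hle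
  obtain ⟨x, hxa, hxb, hxQ⟩ := hx
  refine hb (hQ3 x hxa hxQ ?_)
  set φ := LinearMap.lsmul R (Submodule.torsionBySet R N (b : Set R)) x with hφ
  have k0 : FE a (LinearMap.ker φ) 0 :=
    FE.zero_of_injective _ (Submodule.subtype_injective _) hb0
  have k1 : FE a (LinearMap.ker φ) 1 := FE.left _ _ (ker_range_exact φ)
    (Submodule.subtype_injective _) (LinearMap.surjective_rangeRestrict _)
    (FE.zero_of_injective _ (Submodule.subtype_injective _) hb0) hb1
  have e := torsionEquiv N b x
  by_contra hbad2
  refine hmax (b ⊔ Ideal.span {x}) ⟨k0.congr e, k1.congr e, fun h => hbad2 (h.congr e.symm)⟩ ?_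
  refine lt_of_le_of_ne le_sup_left fun h => hxb ?_
  rw [h]
  exact Ideal.mem_sup_right (Ideal.mem_span_singleton_self x)

/-- A weakly Laskerian `a`-torsion module with finitely generated `Ext^0` and `Ext^1` is cofinite. -/
lemma good_of_wl [IsNoetherianRing R] {a : Ideal R} {N : Type u} [AddCommGroup N]
    [Module R N] (ht : ∀ x ∈ a, ∀ d : N, ∃ k : ℕ, x ^ k • d = 0) (h0 : FE a N 0) (h1 : FE a N 1)
    (hs : IsWeaklyLaskerian R N) : Good a N := by
  obtain ⟨L, hL, hfin⟩ := wl_fsf hs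
  have : Module.Finite R L := Module.Finite.iff_fg.2 hL
  have hgL : Good a L := Good.of_finite _ _
  have ex := LinearMap.exact_subtype_mkQ L
  refine Good.mid _ _ ex (Submodule.subtype_injective _) (Submodule.mkQ_surjective _) hgL ?_
  refine good_of_finite_supp ?_
    (FE.right _ _ ex (Submodule.subtype_injective _) (Submodule.mkQ_surjective _) h0 (hgL _))
    (FE.right _ _ ex (Submodule.subtype_injective _) (Submodule.mkQ_surjective _) h1 (hgL _)) hfin
  intro x hx d
  obtain ⟨z, rfl⟩ := Submodule.mkQ_surjective _ d
  obtain ⟨k, hk⟩ := ht x hx z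
  exact ⟨k, by rw [← map_smul, hk, map_zero]⟩

end Part4

section Part5

variable {R}

section Compare
variable {X Y : ModuleCat.{u} R} (P : ProjectiveResolution X)

/-- complex computing the old `Ext` -/
noncomputable abbrev DD (P : ProjectiveResolution X) (Y : ModuleCat.{u} R) :
    ChainComplex (ModuleCat.{u} R)ᵒᵖ ℕ :=
  (((linearYoneda R (ModuleCat.{u} R)).obj Y).rightOp.mapHomologicalComplex _).obj P.complex

/-- the old Ext as homology of `DD` -/
noncomputable def isoD (P : ProjectiveResolution X) (Y : ModuleCat.{u} R) (n : ℕ) :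
    (((linearYoneda R (ModuleCat.{u} R)).obj Y).rightOp.leftDerived n).obj X ≅
      (DD P Y).homology n :=
  P.isoLeftDerivedObj ((linearYoneda R (ModuleCat.{u} R)).obj Y).rightOp n

/-- cocycles -/
noncomputable abbrev ZZ (P : ProjectiveResolution X) (Y : ModuleCat.{u} R) (n : ℕ) :
    ModuleCat.{u} R := ((DD P Y).opcycles n).unop

/-- inclusion of cocycles -/
noncomputable def zι (P : ProjectiveResolution X) (Y : ModuleCat.{u} R) (n : ℕ) :
    ZZ P Y n ⟶ ModuleCat.of R (P.complex.X n ⟶ Y) := ((DD P Y).pOpcycles n).unop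

/-- projection from cocycles -/
noncomputable def zq (P : ProjectiveResolution X) (Y : ModuleCat.{u} R) (n : ℕ) :
    ZZ P Y n ⟶ extModule R n X Y :=
  ((isoD P Y n).hom ≫ (DD P Y).homologyι n).unop

lemma zι_inj (n : ℕ) : Function.Injective (zι P Y n) := by
  rw [← ModuleCat.mono_iff_injective]
  exact unop_mono_of_epi ((DD P Y).pOpcycles n)

lemma zι_mem (n : ℕ) (z : ZZ P Y n) :
    P.complex.d (n + 1) n ≫ (zι P Y n z : P.complex.X n ⟶ Y) = 0 := by
  have h := congrArg Quiver.Hom.unop ((DD P Y).d_pOpcycles (n + 1) n)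
  have h2 := congrArg (fun f => (ModuleCat.Hom.hom f) z) h
  exact h2

lemma zι_exists (n : ℕ) (f : P.complex.X n ⟶ Y) (hf : P.complex.d (n + 1) n ≫ f = 0) :
    ∃ z, zι P Y n z = f := by
  have h := (ShortComplex.exact_of_g_is_cokernel (.mk _ _ ((DD P Y).d_pOpcycles (n + 1) n))
    ((DD P Y).opcyclesIsCokernel (n + 1) n (by simp))).unop
  rw [ShortComplex.moduleCat_exact_iff] at h
  exact h f hf

lemma zq_surj (n : ℕ) : Function.Surjective (zq P Y n) := by
  rw [← ModuleCat.epi_iff_surjective]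
  have h1 : Mono ((isoD P Y n).hom ≫ (DD P Y).homologyι n) := mono_comp _ _
  exact unop_epi_of_mono _

lemma zq_eq_zero_iff (n : ℕ) (z : ZZ P Y n) : zq P Y n z = 0 ↔
    ∃ g : P.complex.X ((ComplexShape.down ℕ).next n) ⟶ Y,
      P.complex.d n ((ComplexShape.down ℕ).next n) ≫ g = zι P Y n z := by
  have h := (ShortComplex.exact_of_f_is_kernel
    (.mk _ _ ((DD P Y).homologyι_comp_fromOpcycles n ((ComplexShape.down ℕ).next n)))
    ((DD P Y).homologyIsKernel n _ rfl)).unop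
  rw [ShortComplex.moduleCat_exact_iff] at h
  have hz : zq P Y n z = 0 ↔ ((DD P Y).homologyι n).unop z = 0 := by
    have : zq P Y n = ((DD P Y).homologyι n).unop ≫
      (isoD P Y n).hom.unop := rfl
    rw [this]
    have hm : Mono (isoD P Y n).hom.unop := inferInstance
    rw [ModuleCat.mono_iff_injective] at hm
    exact ⟨fun h => hm (h.trans (map_zero _).symm), fun h => (congrArg (isoD P Y n).hom.unop h).trans (map_zero _)⟩
  have hc := congrArg Quiver.Hom.unop
    ((DD P Y).p_fromOpcycles n ((ComplexShape.down ℕ).next n))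
  rw [hz]
  constructor
  · intro h0
    obtain ⟨g, hg⟩ := h z h0
    refine ⟨g, ?_⟩
    have := congrArg (fun f => (ModuleCat.Hom.hom f) g) hc
    refine this.symm.trans ?_
    exact congrArg (zι P Y n) hg
  · rintro ⟨g, hg⟩
    have := congrArg (fun f => (ModuleCat.Hom.hom f) g) hc
    have h3 : ((DD P Y).fromOpcycles n ((ComplexShape.down ℕ).next n)).unop g = z := by
      apply zι_inj
      exact Eq.trans this hg
    rw [← h3]
    have h4 := congrArg Quiver.Hom.unop
      ((DD P Y).homologyι_comp_fromOpcycles n ((ComplexShape.down ℕ).next n))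
    exact congrArg (fun f => (ModuleCat.Hom.hom f) g) h4

lemma extMk_zero_iff (n : ℕ) (f : P.complex.X n ⟶ Y) (hf : P.complex.d (n + 1) n ≫ f = 0) :
    P.extMk f (n + 1) rfl hf = 0 ↔ ∃ g : P.complex.X ((ComplexShape.down ℕ).next n) ⟶ Y,
      P.complex.d n ((ComplexShape.down ℕ).next n) ≫ g = f := by
  cases n with
  | succ n =>
    rw [P.extMk_eq_zero_iff f (n + 1 + 1) rfl hf n rfl, ChainComplex.next_nat_succ]
  | zero =>
    have h0 : P.complex.d 0 ((ComplexShape.down ℕ).next 0) = 0 :=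
      P.complex.shape _ _ (by simp)
    rw [h0]
    constructor
    · intro h
      refine ⟨0, ?_⟩
      have h1 : f = 0 := by
        simp only [← P.extEquivCohomologyClass.apply_eq_iff_eq,
          ProjectiveResolution.extEquivCohomologyClass_extMk,
          ProjectiveResolution.extEquivCohomologyClass_zero,
          CochainComplex.HomComplex.CohomologyClass.mk_eq_zero_iff] at h
        rw [CochainComplex.HomComplex.Cocycle.toSingleMk_mem_coboundaries_iff _ _ _ _ _ 1
          (by simp)] at h
        obtain ⟨g, hg⟩ := h
        have hz : g = 0 := by
          apply Limits.IsZero.eq_of_src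
          exact P.cochainComplex.isZero_of_isStrictlyLE 0 1
        rw [hz, Limits.comp_zero] at hg
        rw [← cancel_epi (P.cochainComplexXIso (-((0:ℕ):ℤ)) 0 rfl).hom]
        rw [← hg, Limits.comp_zero]
      simp [h1]
    · rintro ⟨g, hg⟩
      have : f = 0 := by simpa using hg.symm
      subst this
      simp

/-- cocycles to the new Ext -/
noncomputable def zE (P : ProjectiveResolution X) (Y : ModuleCat.{u} R) (n : ℕ) :
    ZZ P Y n →ₗ[R] Abelian.Ext X Y n where
  toFun z := P.extMk (zι P Y n z : P.complex.X n ⟶ Y) (n + 1) rfl (zι_mem P n z)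
  map_add' x y := by
    rw [P.add_extMk]
    congr 1
    exact map_add (zι P Y n).hom x y
  map_smul' r x := by
    rw [RingHom.id_apply, Abelian.Ext.smul_eq_comp_mk₀, P.extMk_comp_mk₀]
    congr 1
    refine (map_smul (zι P Y n).hom r x).trans ?_
    simp

lemma zE_surj (n : ℕ) : Function.Surjective (zE P Y n) := by
  intro y
  obtain ⟨f, hf, rfl⟩ := P.extMk_surjective y (n + 1) rfl
  obtain ⟨z, hz⟩ := zι_exists P n f hf
  refine ⟨z, ?_⟩
  subst hz
  rfl

lemma z_ker (n : ℕ) : LinearMap.ker (zq P Y n).hom = LinearMap.ker (zE P Y n) := by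
  ext z
  rw [LinearMap.mem_ker, LinearMap.mem_ker]
  exact (zq_eq_zero_iff P n z).trans (extMk_zero_iff P n _ (zι_mem P n z)).symm

/-- comparison of the two Ext modules -/
noncomputable def cmpE (P : ProjectiveResolution X) (Y : ModuleCat.{u} R) (n : ℕ) :
    extModule R n X Y ≃ₗ[R] Abelian.Ext X Y n :=
  ((zq P Y n).hom.quotKerEquivOfSurjective (zq_surj P n)).symm.trans
    ((Submodule.quotEquivOfEq _ _ (z_ker P n)).trans
      ((zE P Y n).quotKerEquivOfSurjective (zE_surj P n)))

lemma cmpE_zq (n : ℕ) (z : ZZ P Y n) : cmpE P Y n (zq P Y n z) = zE P Y n z := by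
  have : ((zq P Y n).hom.quotKerEquivOfSurjective (zq_surj P n)).symm ((zq P Y n).hom z) =
    Submodule.Quotient.mk z := by
    rw [LinearEquiv.symm_apply_eq]
    rfl
  unfold cmpE
  simp only [LinearEquiv.trans_apply]
  erw [this]
  rfl

lemma cmpE_nat {X' : ModuleCat.{u} R} (P' : ProjectiveResolution X') (g : X' ⟶ X) (n : ℕ)
    (x : extModule R n X Y) :
    cmpE P' Y n ((((Ext R (ModuleCat.{u} R) n).map g.op).app Y).hom x) =
      (Abelian.Ext.mk₀ g).comp (cmpE P Y n x) (zero_add n) := by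
  obtain ⟨z, rfl⟩ := zq_surj P n x
  let φ : ProjectiveResolution.Hom P' P g :=
    ⟨ProjectiveResolution.lift g P' P, by
      rw [← HomologicalComplex.comp_f, ProjectiveResolution.lift_commutes]; rfl⟩
  let F := ((linearYoneda R (ModuleCat.{u} R)).obj Y).rightOp
  let ψ : DD P' Y ⟶ DD P Y := (F.mapHomologicalComplex _).map φ.hom
  have e1 : (F.leftDerived n).map g ≫ (isoD P Y n).hom =
      (isoD P' Y n).hom ≫ HomologicalComplex.homologyMap ψ n := ProjectiveResolution.isoLeftDerivedObj_hom_naturality g P' P φ.hom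
    (by simpa using φ.hom_f_zero_comp_π_f_zero) F n
  have e2 : (F.leftDerived n).map g ≫ ((isoD P Y n).hom ≫ (DD P Y).homologyι n) =
      ((isoD P' Y n).hom ≫ (DD P' Y).homologyι n) ≫
        HomologicalComplex.opcyclesMap ψ n := by
    rw [← Category.assoc, e1, Category.assoc, Category.assoc,
      ← HomologicalComplex.homologyι_naturality]
  have e3 := congrArg (fun f => (ModuleCat.Hom.hom f) z) (congrArg Quiver.Hom.unop e2)
  have e4 : (((Ext R (ModuleCat.{u} R) n).map g.op).app Y).hom (zq P Y n z) =
    zq P' Y n ((HomologicalComplex.opcyclesMap ψ n).unop z) := e3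
  rw [e4, cmpE_zq, cmpE_zq]
  have e5 := congrArg (fun f => (ModuleCat.Hom.hom f) z) (congrArg Quiver.Hom.unop
    (HomologicalComplex.p_opcyclesMap ψ n))
  have e6 : (zι P' Y n ((HomologicalComplex.opcyclesMap ψ n).unop z) : P'.complex.X n ⟶ Y) =
    φ.hom.f n ≫ (zι P Y n z : P.complex.X n ⟶ Y) := e5
  have e7 := ProjectiveResolution.mk₀_comp_extMk (zι P Y n z : P.complex.X n ⟶ Y) (n + 1) rfl
    (zι_mem P n z) φ
  refine Eq.trans ?_ e7.symm
  simp only [← e6]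
  rfl

end Compare

end Part5

section Part6

variable {R}

/-- the projection `R/a^l → R/a^k` -/
def prM (a : Ideal R) {k l : ℕ} (h : k ≤ l) :
    ModuleCat.of R (R ⧸ a ^ l) ⟶ ModuleCat.of R (R ⧸ a ^ k) :=
  ModuleCat.ofHom (Submodule.mapQ _ _ LinearMap.id (Ideal.pow_le_pow_right h))

lemma prM_comp (a : Ideal R) {k l m : ℕ} (h : k ≤ l) (h' : l ≤ m) :
    prM a h' ≫ prM a h = prM a (h.trans h') := by
  ext : 1
  apply LinearMap.ext
  intro x
  obtain ⟨x, rfl⟩ := Submodule.mkQ_surjective _ x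
  rfl

lemma prM_id (a : Ideal R) (k : ℕ) : prM a (le_refl k) = 𝟙 _ := by
  ext : 1
  apply LinearMap.ext
  intro x
  obtain ⟨x, rfl⟩ := Submodule.mkQ_surjective _ x
  rfl

/-- Ext^n(R/a^k, M) -/
abbrev EX (a : Ideal R) (M : Type u) [AddCommGroup M] [Module R M] (n k : ℕ) : Type u :=
  Abelian.Ext (ModuleCat.of R (R ⧸ a ^ k)) (ModuleCat.of R M) n

/-- restriction maps -/
noncomputable def rs (a : Ideal R) (M : Type u) [AddCommGroup M] [Module R M] (n : ℕ) (k l : ℕ)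
    (h : k ≤ l) : EX a M n k →ₗ[R] EX a M n l :=
  (Abelian.Ext.mk₀ (prM a h)).precompOfLinear R (ModuleCat.of R M) (zero_add n)

lemma rs_apply (a : Ideal R) (M : Type u) [AddCommGroup M] [Module R M] (n : ℕ) {k l : ℕ}
    (h : k ≤ l) (y : EX a M n k) :
    rs a M n k l h y = (Abelian.Ext.mk₀ (prM a h)).comp y (zero_add n) := rfl

lemma rs_rs (a : Ideal R) (M : Type u) [AddCommGroup M] [Module R M] (n : ℕ) {k l m : ℕ}
    (h : k ≤ l) (h' : l ≤ m) (y : EX a M n k) :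
    rs a M n l m h' (rs a M n k l h y) = rs a M n k m (h.trans h') y := by
  simp only [rs_apply]
  rw [← Abelian.Ext.comp_assoc _ _ _ (zero_add 0) (zero_add n) (by simp),
    Abelian.Ext.mk₀_comp_mk₀, prM_comp]

lemma rs_id (a : Ideal R) (M : Type u) [AddCommGroup M] [Module R M] (n : ℕ) {k : ℕ}
    (y : EX a M n k) : rs a M n k k le_rfl y = y := by
  simp only [rs_apply]
  rw [prM_id, Abelian.Ext.mk₀_id_comp]

/-- `H` is the colimit of the `Ext^n(R/a^k, M)`. -/
structure IsLC (a : Ideal R) (n : ℕ) (M : Type u) [AddCommGroup M] [Module R M]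
    (H : Type u) [AddCommGroup H] [Module R H] where
  /-- cocone maps -/
  i : ∀ k, EX a M n k →ₗ[R] H
  w : ∀ {k l : ℕ} (h : k ≤ l) (y : EX a M n k), i l (rs a M n k l h y) = i k y
  surj : ∀ x, ∃ k y, i k y = x
  inj : ∀ k y, i k y = 0 → ∃ l, ∃ h : k ≤ l, rs a M n k l h y = 0

instance (a : Ideal R) (n : ℕ) (M : Type u) [AddCommGroup M] [Module R M] :
    DirectedSystem (EX a M n) (fun k l h => rs a M n k l h) where
  map_self _ y := rs_id a M n y
  map_map _ _ _ h h' y := rs_rs a M n h h' y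

/-- local cohomology as a direct limit -/
abbrev LC (a : Ideal R) (n : ℕ) (M : Type u) [AddCommGroup M] [Module R M] : Type u :=
  Module.DirectLimit (EX a M n) (rs a M n)

/-- the canonical one -/
noncomputable def LC.is (a : Ideal R) (n : ℕ) (M : Type u) [AddCommGroup M] [Module R M] :
    IsLC a n M (LC a n M) where
  i k := Module.DirectLimit.of R ℕ (EX a M n) (rs a M n) k
  w _ _ := Module.DirectLimit.of_f
  surj x := Module.DirectLimit.exists_of x
  inj _ _ h := Module.DirectLimit.of.zero_exact h

variable {a : Ideal R} {n : ℕ} {M : Type u} [AddCommGroup M] [Module R M]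
    {H : Type u} [AddCommGroup H] [Module R H]

/-- uniqueness -/
noncomputable def IsLC.equiv (h : IsLC a n M H) : LC a n M ≃ₗ[R] H :=
  LinearEquiv.ofBijective (Module.DirectLimit.lift R ℕ (EX a M n) (rs a M n) h.i
    (fun _ _ hij y => h.w hij y)) (by
  constructor
  · rw [injective_iff_map_eq_zero]
    intro x hx
    obtain ⟨k, y, rfl⟩ := Module.DirectLimit.exists_of x
    rw [Module.DirectLimit.lift_of] at hx
    obtain ⟨l, hl, h0⟩ := h.inj k y hx
    rw [← Module.DirectLimit.of_f (hij := hl), h0, map_zero]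
  · intro x
    obtain ⟨k, y, rfl⟩ := h.surj x
    exact ⟨_, Module.DirectLimit.lift_of _ _ _⟩)

lemma IsLC.torsion (h : IsLC a n M H) (x : R) (hx : x ∈ a) (d : H) : ∃ k : ℕ, x ^ k • d = 0 := by
  obtain ⟨k, y, rfl⟩ := h.surj d
  refine ⟨k, ?_⟩
  rw [← map_smul, ext_smul_zero (Ideal.pow_mem_pow hx k), map_zero]

section Real
open Limits Opposite

lemma colim_zero {G : (ℕᵒᵖ)ᵒᵖ ⥤ ModuleCat.{u} R} {c : Cocone G} (hc : IsColimit c) (k : ℕ)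
    (x : G.obj (op (op k))) (hx : (c.ι.app (op (op k))).hom x = 0) :
    ∃ l, ∃ h : k ≤ l, (G.map (homOfLE h).op.op).hom x = 0 := by
  have : PreservesFilteredColimitsOfSize.{0, 0} (forget (ModuleCat.{u} R)) :=
    preservesSmallestFilteredColimits_of_preservesFilteredColimits _
  have hy2 : c.ι.app (op (op k)) x = c.ι.app (op (op k)) (0 : G.obj (op (op k))) :=
    Eq.trans hx (map_zero (c.ι.app (op (op k))).hom).symm
  obtain ⟨l, f, g, hfg⟩ := (Concrete.isColimit_rep_eq_iff_exists _ hc x _).1 hy2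
  refine ⟨l.unop.unop, leOfHom f.unop.unop, ?_⟩
  exact hfg.trans (map_zero (G.map g).hom)

/-- Mathlib's local cohomology -/
noncomputable def lcIs (a : Ideal R) (n : ℕ) (M : ModuleCat.{u} R) :
    IsLC a n M ((localCohomology a n).obj M) := by
  let I := localCohomology.idealPowersDiagram a
  have := localCohomology.hasColimitDiagram.{u, 0} I n
  let F := localCohomology.diagram I n
  let c := ((evaluation (ModuleCat.{u} R) (ModuleCat.{u} R)).obj M).mapCocone (colimit.cocone F)
  have hc : IsColimit c := isColimitOfPreserves _ (colimit.isColimit F)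
  have : PreservesFilteredColimitsOfSize.{0, 0} (forget (ModuleCat.{u} R)) :=
    preservesSmallestFilteredColimits_of_preservesFilteredColimits _
  have : PreservesColimit (F ⋙ (evaluation (ModuleCat.{u} R) (ModuleCat.{u} R)).obj M)
      (forget (ModuleCat.{u} R)) := inferInstance
  let P : ∀ k : ℕ, ProjectiveResolution (ModuleCat.of R (R ⧸ a ^ k)) := fun k =>
    Classical.choice (HasProjectiveResolution.out (Z := ModuleCat.of R (R ⧸ a ^ k)))
  have key : ∀ {k l : ℕ} (h : k ≤ l) (x : extModule R n (ModuleCat.of R (R ⧸ a ^ k)) M),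
    cmpE (P l) M n ((F.map (homOfLE h).op.op).app M x) = rs a M n k l h (cmpE (P k) M n x) := by
    intro k l h x
    exact cmpE_nat (P k) (P l) (prM a h) n x
  let T : ∀ {k l : ℕ} (_ : k ≤ l), extModule R n (ModuleCat.of R (R ⧸ a ^ k)) M →ₗ[R]
    extModule R n (ModuleCat.of R (R ⧸ a ^ l)) M := fun h => ((F.map (homOfLE h).op.op).app M).hom
  let j : ∀ k : ℕ, extModule R n (ModuleCat.of R (R ⧸ a ^ k)) M →ₗ[R]
    (localCohomology a n).obj M := fun k => (c.ι.app (op (op k))).hom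
  have jw : ∀ {k l : ℕ} (h : k ≤ l) x, j l (T h x) = j k x := fun h x =>
    congrArg (fun f => (ModuleCat.Hom.hom f) x) (c.w (homOfLE h).op.op)
  have js : ∀ x, ∃ k y, j k y = x := by
    intro x
    obtain ⟨⟨⟨k⟩⟩, y, hy⟩ := Concrete.isColimit_exists_rep _ hc x
    exact ⟨k, y, hy⟩
  have ji : ∀ k x, j k x = 0 → ∃ l, ∃ h : k ≤ l, T h x = 0 := by
    intro k x hy
    exact colim_zero hc k x hy
  have key' : ∀ {k l : ℕ} (h : k ≤ l) (x : extModule R n (ModuleCat.of R (R ⧸ a ^ k)) M),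
    cmpE (P l) M n (T h x) = rs a M n k l h (cmpE (P k) M n x) := key
  clear_value T j
  exact
  { i := fun k => j k ∘ₗ (cmpE (P k) M n).symm.toLinearMap
    w := by
      intro k l h y
      obtain ⟨x, rfl⟩ := (cmpE (P k) M n).surjective y
      rw [← key' h x]
      simp [jw]
    surj := by
      intro x
      obtain ⟨k, y, hy⟩ := js x
      exact ⟨k, cmpE (P k) M n y, by simpa using hy⟩
    inj := by
      intro k y hy
      obtain ⟨x, rfl⟩ := (cmpE (P k) M n).surjective y
      obtain ⟨l, h, h0⟩ := ji k x (by simpa using hy)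
      exact ⟨l, h, by rw [← key' h x, h0, map_zero]⟩ }
end Real

end Part6

section Part7

variable {R}

/-- the torsion functor `Γ_a`. -/
def Gam (a : Ideal R) (M : Type u) [AddCommGroup M] [Module R M] : Submodule R M where
  carrier := {m | ∃ k : ℕ, ∀ x ∈ a ^ k, x • m = 0}
  zero_mem' := ⟨0, fun x _ => smul_zero x⟩
  add_mem' := by
    rintro m m' ⟨k, hk⟩ ⟨l, hl⟩
    refine ⟨k + l, fun x hx => ?_⟩
    rw [smul_add, hk x (Ideal.pow_le_pow_right (by omega) hx),
      hl x (Ideal.pow_le_pow_right (by omega) hx), add_zero]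
  smul_mem' := by
    rintro r m ⟨k, hk⟩
    refine ⟨k, fun x hx => ?_⟩
    rw [smul_comm, hk x hx, smul_zero]

lemma mem_Gam {a : Ideal R} {M : Type u} [AddCommGroup M] [Module R M] {m : M} :
    m ∈ Gam a M ↔ ∃ k : ℕ, ∀ x ∈ a ^ k, x • m = 0 := Iff.rfl

/-- torsion modules -/
def Tor' (a : Ideal R) (M : Type u) [AddCommGroup M] [Module R M] : Prop :=
  ∀ m : M, ∃ k : ℕ, ∀ x ∈ a ^ k, x • m = 0

lemma tor_Gam (a : Ideal R) (M : Type u) [AddCommGroup M] [Module R M] : Tor' a (Gam a M) := by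
  rintro ⟨m, k, hk⟩
  exact ⟨k, fun x hx => Subtype.ext (hk x hx)⟩

variable {a : Ideal R} {M N : Type u} [AddCommGroup M] [Module R M] [AddCommGroup N] [Module R N]

lemma fg_bound (J : Submodule R M) (hJ : J.FG) (h : J ≤ Gam a M) :
    ∃ k : ℕ, ∀ x ∈ a ^ k, ∀ m ∈ J, x • m = 0 := by
  induction J, hJ using Submodule.fg_induction with
  | singleton m =>
    obtain ⟨k, hk⟩ := h (Submodule.mem_span_singleton_self m)
    refine ⟨k, fun x hx y hy => ?_⟩
    obtain ⟨r, rfl⟩ := Submodule.mem_span_singleton.1 hy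
    rw [smul_comm, hk x hx, smul_zero]
  | sup J1 J2 h1 h2 ih1 ih2 =>
    obtain ⟨k, hk⟩ := ih1 (le_sup_left.trans h)
    obtain ⟨l, hl⟩ := ih2 (le_sup_right.trans h)
    refine ⟨k + l, fun x hx y hy => ?_⟩
    obtain ⟨y1, hy1, y2, hy2, rfl⟩ := Submodule.mem_sup.1 hy
    rw [smul_add, hk x (Ideal.pow_le_pow_right (by omega) hx) _ hy1,
      hl x (Ideal.pow_le_pow_right (by omega) hx) _ hy2, add_zero]

lemma Gam_quot [IsNoetherianRing R] (y : M ⧸ Gam a M) (k : ℕ)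
    (hy : ∀ x ∈ a ^ k, x • y = 0) : y = 0 := by
  obtain ⟨m, rfl⟩ := Submodule.mkQ_surjective _ y
  have h1 : Submodule.map (LinearMap.toSpanSingleton R M m) (a ^ k) ≤ Gam a M := by
    rintro _ ⟨x, hx, rfl⟩
    have := hy x hx
    rw [← map_smul] at this
    exact (Submodule.Quotient.mk_eq_zero _).1 this
  obtain ⟨l, hl⟩ := fg_bound _ ((IsNoetherian.noetherian (a ^ k)).map _) h1
  have : m ∈ Gam a M := by
    refine ⟨l + k, fun x hx => ?_⟩
    rw [pow_add] at hx
    refine Submodule.mul_induction_on hx (fun p hp q hq => ?_) (fun p q hp hq => ?_)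
    · rw [mul_smul]
      exact hl p hp _ ⟨q, hq, rfl⟩
    · rw [add_smul, hp, hq, add_zero]
  simpa using this

lemma inj_Gam [IsNoetherianRing R] [Module.Injective R M] : Module.Injective R (Gam a M) := by
  apply Module.Baer.injective
  intro J f
  let f' : J →ₗ[R] M := (Gam a M).subtype ∘ₗ f
  obtain ⟨k, hk⟩ := fg_bound (a := a) (LinearMap.range f')
    (IsNoetherian.noetherian _ |>.map f' |> fun h => by rwa [Submodule.map_top] at h)
    (by rintro _ ⟨j, rfl⟩; exact (f j).2)
  obtain ⟨c, hc⟩ := Ideal.exists_pow_inf_eq_pow_smul a (M := R) J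
  have hc := hc (c + k) (by omega)
  let φ : J →ₗ[R] (R ⧸ a ^ (c + k)) := (a ^ (c + k)).mkQ ∘ₗ J.subtype
  have hφ : LinearMap.ker φ ≤ LinearMap.ker f' := by
    intro j hj
    have hj1 : (j : R) ∈ a ^ (c + k) := (Submodule.Quotient.mk_eq_zero _).1 hj
    have hj2 : (j : R) ∈ a ^ (c + k) • (⊤ : Submodule R R) ⊓ J := ⟨by simpa using hj1, j.2⟩
    rw [hc, show c + k - c = k by omega] at hj2
    have hj3 : (j : R) ∈ a ^ k • J := Submodule.smul_mono le_rfl inf_le_right hj2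
    have hj4 : j ∈ a ^ k • (⊤ : Submodule R J) := by
      have : (a ^ k • (⊤ : Submodule R J)).map J.subtype = a ^ k • J := by
        rw [Submodule.map_smul'', Submodule.map_top, Submodule.range_subtype]
      rw [← this] at hj3
      obtain ⟨j', h1, h2⟩ := hj3
      rwa [← Subtype.ext h2]
    rw [LinearMap.mem_ker]
    refine Submodule.smul_induction_on hj4 (fun r hr y _ => ?_) (fun p q hp hq => ?_)
    · rw [map_smul]
      exact hk r hr _ ⟨y, rfl⟩
    · rw [map_add, hp, hq, add_zero]
  obtain ⟨h, hh⟩ := Module.Injective.out (R := R) (Q := M)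
    ((LinearMap.ker φ).liftQ φ le_rfl)
    (by rw [← LinearMap.ker_eq_bot]; exact Submodule.ker_liftQ_eq_bot _ _ _ le_rfl)
    ((LinearMap.ker φ).liftQ f' hφ)
  refine ⟨(h ∘ₗ (a ^ (c + k)).mkQ).codRestrict (Gam a M) (fun r => ⟨c + k, fun x hx => ?_⟩), ?_⟩
  · rw [LinearMap.comp_apply, ← map_smul, ← map_smul]
    have : (a ^ (c + k)).mkQ (x • r) = 0 := 
      (Submodule.Quotient.mk_eq_zero _).2 (Ideal.mul_mem_right r _ hx)
    rw [this, map_zero]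
  · intro x hx
    apply Subtype.ext
    have := hh (Submodule.Quotient.mk ⟨x, hx⟩)
    exact this

lemma exists_inj (M : Type u) [AddCommGroup M] [Module R M] :
    ∃ (I : ModuleCat.{u} R) (f : M →ₗ[R] I), Module.Injective R I ∧ Function.Injective f := by
  refine ⟨Injective.under (ModuleCat.of R M), (Injective.ι (ModuleCat.of R M)).hom, ?_, ?_⟩
  · exact (Module.injective_iff_injective_object R _).mpr (Injective.injective_under (ModuleCat.of R M))
  · exact (ModuleCat.mono_iff_injective (Injective.ι (ModuleCat.of R M))).1 inferInstance

lemma exists_inj_tor [IsNoetherianRing R] (h : Tor' a M) :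
    ∃ (I : ModuleCat.{u} R) (f : M →ₗ[R] I), Module.Injective R I ∧ Function.Injective f ∧
      Tor' a I := by
  obtain ⟨I, f, hI, hf⟩ := exists_inj (R := R) M
  refine ⟨ModuleCat.of R (Gam a I), f.codRestrict (Gam a I) (fun m => ?_), inj_Gam, ?_,
    tor_Gam a I⟩
  · obtain ⟨k, hk⟩ := h m
    exact ⟨k, fun x hx => by rw [← map_smul, hk x hx, map_zero]⟩
  · intro x y hxy
    exact hf (congrArg Subtype.val hxy :)

lemma exists_inj_free [IsNoetherianRing R] (h : Gam a M = ⊥) :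
    ∃ (I : ModuleCat.{u} R) (f : M →ₗ[R] I), Module.Injective R I ∧ Function.Injective f ∧
      ∀ (y : I) (k : ℕ), (∀ x ∈ a ^ k, x • y = 0) → y = 0 := by
  obtain ⟨I, f, hI, hf⟩ := exists_inj (R := R) M
  refine ⟨ModuleCat.of R (I ⧸ Gam a I), (Gam a I).mkQ ∘ₗ f, ?_, ?_, Gam_quot⟩
  · have := inj_Gam (a := a) (M := I)
    obtain ⟨r, hr⟩ := Module.Injective.out (R := R) (Q := Gam a I) (Gam a I).subtype
      (Submodule.subtype_injective _) LinearMap.id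
    let s : (I ⧸ Gam a I) →ₗ[R] I := (Gam a I).liftQ (LinearMap.id - (Gam a I).subtype ∘ₗ r) (by
      intro x hx
      have := hr ⟨x, hx⟩
      simp only [Submodule.subtype_apply, LinearMap.id_apply] at this
      simp [this])
    have hs : ∀ y, (Gam a I).mkQ (s y) = y := by
      intro y
      obtain ⟨y, rfl⟩ := Submodule.mkQ_surjective _ y
      simp [s]
    constructor
    intro X Y _ _ _ _ i hi g
    obtain ⟨h, hh⟩ := Module.Injective.out (R := R) (Q := I) i hi (s ∘ₗ g)
    refine ⟨(Gam a I).mkQ ∘ₗ h, fun x => ?_⟩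
    rw [LinearMap.comp_apply, hh]
    exact hs _
  · rw [injective_iff_map_eq_zero]
    intro m hm
    have : f m ∈ Gam a I := by simpa using hm
    obtain ⟨k, hk⟩ := this
    have hm : m ∈ Gam a M := ⟨k, fun x hx => hf (by rw [map_smul, hk x hx, map_zero])⟩
    rw [h] at hm
    simpa using hm

end Part7

section Part8

variable {R}
variable {a : Ideal R} {A B C M N : Type u} [AddCommGroup M] [Module R M] [AddCommGroup N]
  [Module R N] [AddCommGroup A] [AddCommGroup B] [AddCommGroup C] [Module R A] [Module R B]
  [Module R C]

/-- evaluation at `1` of an element of `Ext^0(R/a^k, M)` -/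
noncomputable def ev (a : Ideal R) (M : Type u) [AddCommGroup M] [Module R M] (k : ℕ) :
    EX a M 0 k →ₗ[R] M where
  toFun y := (Abelian.Ext.linearEquiv₀ (R := R) y).hom (Submodule.Quotient.mk 1)
  map_add' x y := by rw [map_add]; rfl
  map_smul' r x := by rw [map_smul]; rfl

lemma ev_mk₀ (k : ℕ) (f : ModuleCat.of R (R ⧸ a ^ k) ⟶ ModuleCat.of R M) :
    ev a M k (Abelian.Ext.mk₀ f) = f.hom (Submodule.Quotient.mk 1) := by
  have : Abelian.Ext.linearEquiv₀ (R := R) (Abelian.Ext.mk₀ f) = f := by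
    rw [← LinearEquiv.eq_symm_apply]; rfl
  exact congrArg (fun g : ModuleCat.of R (R ⧸ a ^ k) ⟶ ModuleCat.of R M =>
    g.hom (Submodule.Quotient.mk 1)) this

lemma exists_mk₀ {X Y : ModuleCat.{u} R} (y : Abelian.Ext X Y 0) :
    ∃ f, y = Abelian.Ext.mk₀ f :=
  ⟨_, (Abelian.Ext.mk₀_linearEquiv₀_apply (R := R) y).symm⟩

lemma ev_inj (k : ℕ) : Function.Injective (ev a M k) := by
  rw [injective_iff_map_eq_zero]
  intro y hy
  obtain ⟨f, rfl⟩ := exists_mk₀ y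
  rw [ev_mk₀] at hy
  have : f = 0 := by
    ext : 1
    apply Submodule.linearMap_qext
    ext
    exact hy
  rw [this, Abelian.Ext.mk₀_zero]

lemma ev_mem (k : ℕ) (y : EX a M 0 k) (x : R) (hx : x ∈ a ^ k) : x • ev a M k y = 0 := by
  rw [← map_smul, ext_smul_zero hx, map_zero]

lemma ev_exists (k : ℕ) (m : M) (h : ∀ x ∈ a ^ k, x • m = 0) : ∃ y, ev a M k y = m := by
  refine ⟨Abelian.Ext.mk₀ (ModuleCat.ofHom ((a ^ k).liftQ (LinearMap.toSpanSingleton R M m)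
    (fun x hx => by simpa using h x hx))), ?_⟩
  rw [ev_mk₀]
  exact (Submodule.liftQ_apply _ _ (1 : R)).trans (one_smul R m)

lemma ev_rs {k l : ℕ} (h : k ≤ l) (y : EX a M 0 k) : ev a M l (rs a M 0 k l h y) = ev a M k y := by
  obtain ⟨f, rfl⟩ := exists_mk₀ y
  rw [rs_apply, Abelian.Ext.mk₀_comp_mk₀, ev_mk₀, ev_mk₀]
  rfl

lemma ev_comp (k : ℕ) (y : EX a M 0 k) (g : ModuleCat.of R M ⟶ ModuleCat.of R N) :
    ev a N k (y.comp (Abelian.Ext.mk₀ g) (add_zero 0)) = g.hom (ev a M k y) := by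
  obtain ⟨f, rfl⟩ := exists_mk₀ y
  rw [Abelian.Ext.mk₀_comp_mk₀, ev_mk₀, ev_mk₀]
  rfl

/-- `H^0 = Γ` -/
noncomputable def lcZero (a : Ideal R) (M : Type u) [AddCommGroup M] [Module R M] :
    IsLC a 0 M (Gam a M) where
  i k := (ev a M k).codRestrict (Gam a M) (fun y => ⟨k, ev_mem k y⟩)
  w h y := Subtype.ext (ev_rs h y)
  surj := by
    rintro ⟨m, k, hk⟩
    obtain ⟨y, hy⟩ := ev_exists k m hk
    exact ⟨k, y, Subtype.ext hy⟩
  inj k y h := by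
    refine ⟨k, le_rfl, ?_⟩
    rw [rs_id]
    apply ev_inj
    rw [map_zero]
    exact (congrArg Subtype.val h :)

lemma rs_comp {n m p : ℕ} {k l : ℕ} (h : k ≤ l) (y : EX a M n k)
    (z : Abelian.Ext (ModuleCat.of R M) (ModuleCat.of R N) m) (hp : n + m = p) :
    rs a N p k l h (y.comp z hp) = (rs a M n k l h y).comp z hp := by
  rw [rs_apply, rs_apply, Abelian.Ext.comp_assoc _ _ _ (zero_add n) hp (by omega)]

lemma tor_dies [IsNoetherianRing R] (n : ℕ) : ∀ (M : Type u) [AddCommGroup M] [Module R M],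
    Tor' a M → ∀ (k : ℕ) (y : EX a M (n + 1) k),
      ∃ l, ∃ h : k ≤ l, rs a M (n + 1) k l h y = 0 := by
  induction n with
  | zero =>
    intro M _ _ hM k y
    obtain ⟨I, f, hI, hf, hT⟩ := exists_inj_tor hM
    have hI' : Injective (ModuleCat.of R I) := (Module.injective_iff_injective_object R I).1 hI
    let hS := sc_exact f (LinearMap.range f).mkQ (LinearMap.exact_map_mkQ_range f) hf
      (Submodule.mkQ_surjective _)
    obtain ⟨z, rfl⟩ := Abelian.Ext.covariant_sequence_exact₁ _ hS y
      (Abelian.Ext.eq_zero_of_injective (I := ModuleCat.of R I) _) rfl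
    obtain ⟨q, hq⟩ := Submodule.mkQ_surjective _ (ev a _ k z)
    obtain ⟨l, hl⟩ := hT q
    obtain ⟨w, hw⟩ := ev_exists (a := a) (k + l) q
      (fun x hx => hl x (Ideal.pow_le_pow_right (by omega) hx))
    refine ⟨k + l, by omega, ?_⟩
    refine (rs_comp (by omega) z hS.extClass rfl).trans ?_
    have : rs a _ 0 k (k + l) (by omega) z =
        w.comp (Abelian.Ext.mk₀ (sc f (LinearMap.range f).mkQ
          (LinearMap.exact_map_mkQ_range f)).g) (add_zero 0) := by
      apply ev_inj
      rw [ev_rs]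
      refine Eq.trans ?_ (ev_comp _ _ _).symm
      rw [hw]
      exact hq.symm
    erw [this]
    rw [Abelian.Ext.comp_assoc_of_second_deg_zero, ShortComplex.ShortExact.comp_extClass,
          Abelian.Ext.comp_zero]
  | succ n ih =>
    intro M _ _ hM k y
    obtain ⟨I, f, hI, hf, hT⟩ := exists_inj_tor hM
    have hI' : Injective (ModuleCat.of R I) := (Module.injective_iff_injective_object R I).1 hI
    let hS := sc_exact f (LinearMap.range f).mkQ (LinearMap.exact_map_mkQ_range f) hf
      (Submodule.mkQ_surjective _)
    obtain ⟨z, rfl⟩ := Abelian.Ext.covariant_sequence_exact₁ _ hS y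
      (Abelian.Ext.eq_zero_of_injective (I := ModuleCat.of R I) _) rfl
    obtain ⟨l, hl, h0⟩ := ih (I ⧸ LinearMap.range f) (by
      intro q
      obtain ⟨q, rfl⟩ := Submodule.mkQ_surjective _ q
      obtain ⟨l, hl⟩ := hT q
      exact ⟨l, fun x hx => by rw [← map_smul, hl x hx, map_zero]⟩) k z
    refine ⟨l, hl, ?_⟩
    refine (rs_comp hl z hS.extClass rfl).trans ?_
    erw [h0]
    rw [Abelian.Ext.zero_comp]

/-- `H^n(M) = H^n(M/Γ)` for `n ≥ 1` -/
noncomputable def lcQuot [IsNoetherianRing R] {n : ℕ} {H : Type u} [AddCommGroup H] [Module R H]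
    (h : IsLC a (n + 1) (M ⧸ Gam a M) H) : IsLC a (n + 1) M H where
  i k := h.i k ∘ₗ ((Abelian.Ext.mk₀ (ModuleCat.ofHom (Gam a M).mkQ)).postcompOfLinear R
    (ModuleCat.of R (R ⧸ a ^ k)) (add_zero (n + 1)))
  w := by
    intro k l hkl y
    rw [LinearMap.comp_apply, LinearMap.comp_apply, ← h.w hkl]
    congr 1
    exact (rs_comp hkl y (Abelian.Ext.mk₀ (ModuleCat.ofHom (Gam a M).mkQ))
      (add_zero (n + 1))).symm
  surj x := by
    let hS := sc_exact (Gam a M).subtype (Gam a M).mkQ (LinearMap.exact_subtype_mkQ _)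
      (Submodule.subtype_injective _) (Submodule.mkQ_surjective _)
    obtain ⟨k, y, rfl⟩ := h.surj x
    obtain ⟨l, hl, h0⟩ := tor_dies (n + 1) (Gam a M) (tor_Gam a M) k (y.comp hS.extClass rfl)
    have h0 := (rs_comp hl y hS.extClass rfl).symm.trans h0
    obtain ⟨z, hz⟩ := Abelian.Ext.covariant_sequence_exact₃ _ hS _ _ h0
    refine ⟨l, z, ?_⟩
    rw [← h.w hl]
    exact congrArg (h.i l) hz
  inj k y hy := by
    let hS := sc_exact (Gam a M).subtype (Gam a M).mkQ (LinearMap.exact_subtype_mkQ _)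
      (Submodule.subtype_injective _) (Submodule.mkQ_surjective _)
    obtain ⟨l, hl, h0⟩ := h.inj k _ hy
    have h0 := (rs_comp hl y (Abelian.Ext.mk₀ (ModuleCat.ofHom (Gam a M).mkQ))
      (add_zero (n + 1))).symm.trans h0
    obtain ⟨z, hz⟩ := Abelian.Ext.covariant_sequence_exact₂ _ hS _ h0
    obtain ⟨m, hm, h1⟩ := tor_dies n (Gam a M) (tor_Gam a M) l z
    refine ⟨m, hl.trans hm, ?_⟩
    rw [← rs_rs _ _ _ hl hm]
    erw [← hz]
    refine (rs_comp hm z (Abelian.Ext.mk₀ (ModuleCat.ofHom (Gam a M).subtype))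
      (add_zero (n + 1))).trans ?_
    rw [h1, Abelian.Ext.zero_comp]

lemma ext_zero_of_free (hfree : ∀ (y : M) (k : ℕ), (∀ x ∈ a ^ k, x • y = 0) → y = 0) (k : ℕ)
    (y : EX a M 0 k) : y = 0 := by
  apply ev_inj
  rw [map_zero]
  exact hfree _ k (ev_mem k y)

/-- dimension shift -/
noncomputable def lcShift {n : ℕ} {H : Type u} [AddCommGroup H] [Module R H]
    [Module.Injective R B] (hfree : ∀ (y : B) (k : ℕ), (∀ x ∈ a ^ k, x • y = 0) → y = 0)
    (f : A →ₗ[R] B) (g : B →ₗ[R] C) (hfg : Function.Exact f g) (hf : Function.Injective f)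
    (hg : Function.Surjective g) (h : IsLC a (n + 1) A H) : IsLC a n C H := by
  have hI' : Injective (ModuleCat.of R B) :=
    (Module.injective_iff_injective_object R B).1 inferInstance
  let hS := sc_exact f g hfg hf hg
  let ε : Abelian.Ext (ModuleCat.of R C) (ModuleCat.of R A) 1 := hS.extClass
  have hinj : ∀ k (y : EX a C n k), y.comp ε rfl = 0 → y = 0 := by
    intro k y hy
    obtain ⟨z, rfl⟩ := Abelian.Ext.covariant_sequence_exact₃ _ hS y rfl hy
    have : z = 0 := by
      cases n with
      | zero => exact ext_zero_of_free hfree k z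
      | succ n => exact Abelian.Ext.eq_zero_of_injective (I := ModuleCat.of R B) z
    rw [this, Abelian.Ext.zero_comp]
  exact
  { i := fun k => h.i k ∘ₗ ε.postcompOfLinear R (ModuleCat.of R (R ⧸ a ^ k)) rfl
    w := by
      intro k l hkl y
      rw [LinearMap.comp_apply, LinearMap.comp_apply, ← h.w hkl]
      congr 1
      exact (rs_comp hkl y ε rfl).symm
    surj := by
      intro x
      obtain ⟨k, y, rfl⟩ := h.surj x
      obtain ⟨z, rfl⟩ := Abelian.Ext.covariant_sequence_exact₁ _ hS y
        (Abelian.Ext.eq_zero_of_injective (I := ModuleCat.of R B) _) rfl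
      exact ⟨k, z, rfl⟩
    inj := by
      intro k y hy
      obtain ⟨l, hl, h0⟩ := h.inj k _ hy
      refine ⟨l, hl, hinj l _ ?_⟩
      exact (rs_comp hl y ε rfl).symm.trans h0 }

end Part8

section Part9

variable {R}
variable {a : Ideal R}

lemma FE.of_free [IsNoetherianRing R] {I : Type u} [AddCommGroup I] [Module R I]
    (hfree : ∀ (y : I) (k : ℕ), (∀ x ∈ a ^ k, x • y = 0) → y = 0) : FE a I 0 := by
  rw [FE.zero_iff]
  have : Subsingleton (Submodule.torsionBySet R I (a : Set R)) := by
    refine ⟨fun x y => Subtype.ext ?_⟩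
    have h : ∀ z : Submodule.torsionBySet R I (a : Set R), (z : I) = 0 := fun z =>
      hfree z 1 (fun x hx => by
        rw [pow_one] at hx
        exact (Submodule.mem_torsionBySet_iff _ _).1 z.2 ⟨x, hx⟩)
    rw [h x, h y]
  infer_instance

lemma FE.of_injective {I : Type u} [AddCommGroup I] [Module R I] [Module.Injective R I] (n : ℕ) :
    FE a I (n + 1) := by
  have hI' : Injective (ModuleCat.of R I) :=
    (Module.injective_iff_injective_object R I).1 inferInstance
  have : Subsingleton (Abelian.Ext (ModuleCat.of R (R ⧸ a)) (ModuleCat.of R I) (n + 1)) :=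
    ⟨fun x y => by
      rw [Abelian.Ext.eq_zero_of_injective (I := ModuleCat.of R I) x,
        Abelian.Ext.eq_zero_of_injective (I := ModuleCat.of R I) y]⟩
  show Module.Finite _ _
  infer_instance

lemma lc_step [IsNoetherianRing R] (n : ℕ) : ∀ (M : Type u) [AddCommGroup M] [Module R M],
    Good a M → (∀ j < n, Good a (LC a j M)) → FE a (LC a n M) 0 ∧ FE a (LC a n M) 1 := by
  induction n with
  | zero =>
    intro M _ _ hM _
    have e := (lcZero a M).equiv.symm
    refine ⟨FE.congr e (FE.zero_of_injective _ (Submodule.subtype_injective _) (hM 0)),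
      FE.congr e ?_⟩
    exact FE.left _ _ (LinearMap.exact_subtype_mkQ (Gam a M)) (Submodule.subtype_injective _)
      (Submodule.mkQ_surjective _) (FE.of_free Gam_quot) (hM 1)
  | succ n ih =>
    intro M _ _ hM hj
    have hG : Good a (Gam a M) := Good.congr (lcZero a M).equiv (hj 0 (by omega))
    have hM' : Good a (M ⧸ Gam a M) := Good.right _ _ (LinearMap.exact_subtype_mkQ (Gam a M))
      (Submodule.subtype_injective _) (Submodule.mkQ_surjective _) hG hM
    have hb : Gam a (M ⧸ Gam a M) = ⊥ := by
      rw [eq_bot_iff]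
      rintro y ⟨k, hk⟩
      exact Gam_quot y k hk
    obtain ⟨I, f, hI, hf, hfree⟩ := exists_inj_free hb
    have hQ : Good a (I ⧸ LinearMap.range f) := by
      intro j
      refine FE.right f (LinearMap.range f).mkQ (LinearMap.exact_map_mkQ_range f) hf
        (Submodule.mkQ_surjective _) ?_ (hM' _)
      cases j with
      | zero => exact FE.of_free hfree
      | succ j => exact FE.of_injective j
    have e : ∀ j, Nonempty (LC a (j + 1) M ≃ₗ[R] LC a j (I ⧸ LinearMap.range f)) := fun j =>
      ⟨(lcQuot (LC.is a (j + 1) (M ⧸ Gam a M))).equiv.trans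
        (lcShift hfree f (LinearMap.range f).mkQ (LinearMap.exact_map_mkQ_range f) hf
        (Submodule.mkQ_surjective _) (LC.is a (j + 1) (M ⧸ Gam a M))).equiv.symm⟩
    obtain ⟨h0, h1⟩ := ih (I ⧸ LinearMap.range f) hQ
      (fun j hjn => Good.congr (e j).some (hj (j + 1) (by omega)))
    exact ⟨FE.congr (e n).some.symm h0, FE.congr (e n).some.symm h1⟩

lemma finite_hom_iff {X N : Type u} [AddCommGroup X] [Module R X] [AddCommGroup N] [Module R N] :
    Module.Finite R (Abelian.Ext (ModuleCat.of R X) (ModuleCat.of R N) 0) ↔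
      Module.Finite R (X →ₗ[R] N) :=
  Module.Finite.equiv_iff ((Abelian.Ext.linearEquiv₀ (R := R) (X := ModuleCat.of R X)
    (Y := ModuleCat.of R N)).trans (ModuleCat.homLinearEquiv (S := R)))

lemma ext_finite_of_FE [IsNoetherianRing R] {N : Type u} [AddCommGroup N] [Module R N] (n : ℕ) :
    (∀ j ≤ n, FE a N j) → ∀ (L : Type u) [AddCommGroup L] [Module R L] [Module.Finite R L],
      Module.support R L ⊆ PrimeSpectrum.zeroLocus (a : Set R) →
      Module.Finite R (Abelian.Ext (ModuleCat.of R L) (ModuleCat.of R N) n) := by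
  induction n with
  | zero =>
    intro hN L _ _ hL
    refine IsNoetherianRing.induction_on_isQuotientEquivQuotientPrime R hL
      (motive := fun L _ _ _ => Module.support R L ⊆ PrimeSpectrum.zeroLocus (a : Set R) →
        Module.Finite R (Abelian.Ext (ModuleCat.of R L) (ModuleCat.of R N) 0)) ?_ ?_ ?_
    · intro L _ _ _ _ _
      rw [finite_hom_iff]
      infer_instance
    · intro L _ _ _ p e hs
      rw [finite_hom_iff]
      have hp : a ≤ p.asIdeal := by
        rw [e.support_eq, Module.support_eq_zeroLocus, Ideal.annihilator_quotient] at hs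
        exact hs (show p ∈ PrimeSpectrum.zeroLocus _ from fun x hx => hx)
      have := finite_hom_iff.1 (hN 0 le_rfl)
      have := isNoetherian_of_isNoetherianRing_of_finite R ((R ⧸ a) →ₗ[R] N)
      refine Module.Finite.of_injective
        (LinearMap.lcomp R N (e.symm.toLinearMap ∘ₗ Submodule.factor hp)) ?_
      intro u v huv
      refine LinearMap.ext fun x => ?_
      obtain ⟨y, rfl⟩ := (e.symm.surjective.comp (Submodule.factor_surjective hp)) x
      exact LinearMap.congr_fun huv y
    · intro A _ _ _ B _ _ _ C _ _ _ f g hf hg hfg hA hC hs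
      exact finite_of_exact (R := R)
        ((Abelian.Ext.mk₀ (sc f g hfg).g).precompOfLinear R (ModuleCat.of R N) (zero_add 0))
        ((Abelian.Ext.mk₀ (sc f g hfg).f).precompOfLinear R (ModuleCat.of R N) (zero_add 0))
        (fun b hb => Abelian.Ext.contravariant_sequence_exact₂ (sc_exact f g hfg hf hg) _ b hb)
        (hC ((Module.support_subset_of_surjective g hg).trans hs))
        (hA ((Module.support_subset_of_injective f hf).trans hs))
  | succ n ih =>
    intro hN L _ _ hL
    refine IsNoetherianRing.induction_on_isQuotientEquivQuotientPrime R hL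
      (motive := fun L _ _ _ => Module.support R L ⊆ PrimeSpectrum.zeroLocus (a : Set R) →
        Module.Finite R (Abelian.Ext (ModuleCat.of R L) (ModuleCat.of R N) (n + 1))) ?_ ?_ ?_
    · intro L _ _ _ _ _
      have : Subsingleton (Abelian.Ext (ModuleCat.of R L) (ModuleCat.of R N) (n + 1)) := by
        refine ⟨fun x y => ?_⟩
        have h : 𝟙 (ModuleCat.of R L) = 0 := by
          ext z
          exact Subsingleton.elim (α := L) _ _
        rw [← Abelian.Ext.mk₀_id_comp x, ← Abelian.Ext.mk₀_id_comp y, h, Abelian.Ext.mk₀_zero,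
          Abelian.Ext.zero_comp, Abelian.Ext.zero_comp]
      infer_instance
    · intro L _ _ _ p e hs
      have hp : a ≤ p.asIdeal := by
        rw [e.support_eq, Module.support_eq_zeroLocus, Ideal.annihilator_quotient] at hs
        exact hs (show p ∈ PrimeSpectrum.zeroLocus _ from fun x hx => hx)
      let g : (R ⧸ a) →ₗ[R] L := e.symm.toLinearMap ∘ₗ Submodule.factor hp
      have hg : Function.Surjective g := e.symm.surjective.comp (Submodule.factor_surjective hp)
      have hfg := LinearMap.exact_subtype_ker_map g
      have hf : Function.Injective (LinearMap.ker g).subtype := Submodule.subtype_injective _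
      have hk := ih (fun j hj => hN j (by omega)) (LinearMap.ker g) (by
        refine (Module.support_subset_of_injective _ hf).trans ?_
        rw [Module.support_eq_zeroLocus, Ideal.annihilator_quotient])
      exact finite_of_exact (R := R)
        ((sc_exact _ g hfg hf hg).extClass.precompOfLinear R (ModuleCat.of R N) (add_comm 1 n))
        ((Abelian.Ext.mk₀ (sc _ g hfg).g).precompOfLinear R (ModuleCat.of R N) (zero_add (n + 1)))
        (fun b hb => Abelian.Ext.contravariant_sequence_exact₃ (sc_exact _ g hfg hf hg) _ b hb
          (add_comm 1 n)) hk (hN (n + 1) le_rfl)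
    · intro A _ _ _ B _ _ _ C _ _ _ f g hf hg hfg hA hC hs
      exact finite_of_exact (R := R)
        ((Abelian.Ext.mk₀ (sc f g hfg).g).precompOfLinear R (ModuleCat.of R N) (zero_add (n + 1)))
        ((Abelian.Ext.mk₀ (sc f g hfg).f).precompOfLinear R (ModuleCat.of R N) (zero_add (n + 1)))
        (fun b hb => Abelian.Ext.contravariant_sequence_exact₂ (sc_exact f g hfg hf hg) _ b hb)
        (hC ((Module.support_subset_of_surjective g hg).trans hs))
        (hA ((Module.support_subset_of_injective f hf).trans hs))

lemma good_minimax [IsNoetherianRing R] {K : Type u} [AddCommGroup K] [Module R K]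
    (hK : ∃ L₀ : Submodule R K, L₀.FG ∧ IsArtinian R (K ⧸ L₀)) (h : FE a K 0) : Good a K := by
  obtain ⟨L, hL, hA⟩ := hK
  have : Module.Finite R L := Module.Finite.iff_fg.2 hL
  have hgL : Good a L := Good.of_finite _ _
  have ex := LinearMap.exact_subtype_mkQ L
  have h1 : FE a (K ⧸ L) 0 :=
    FE.right _ _ ex (Submodule.subtype_injective _) (Submodule.mkQ_surjective _) h (hgL 1)
  exact Good.mid _ _ ex (Submodule.subtype_injective _) (Submodule.mkQ_surjective _) hgL
    (Good.of_isArtinian ((FE.zero_iff _ _).1 h1))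

lemma main_FE [IsNoetherianRing R] (M : ModuleCat.{u} R) [Module.Finite R M]
    (t : ℕ) (h : ∀ i ≤ t, IsWeaklyLaskerian R ((localCohomology a i).obj M)) :
    FE a ((localCohomology a (t + 1)).obj M) 0 ∧ FE a ((localCohomology a (t + 1)).obj M) 1 := by
  have hM : Good a M := Good.of_finite _ _
  have key : ∀ i ≤ t, Good a (LC a i M) := by
    intro i
    induction i using Nat.strong_induction_on with
    | _ i ih =>
      intro hi
      obtain ⟨h0, h1⟩ := lc_step (a := a) i M hM (fun j hj => ih j hj (by omega))
      have e := (lcIs a i M).equiv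
      exact Good.congr e.symm (good_of_wl (lcIs a i M).torsion (FE.congr e h0) (FE.congr e h1)
        (h i hi))
  obtain ⟨h0, h1⟩ := lc_step (a := a) (t + 1) M hM (fun j hj => key j (by omega))
  have e := (lcIs a (t + 1) M).equiv
  exact ⟨FE.congr e h0, FE.congr e h1⟩

end Part9

theorem stmt11 [IsNoetherianRing R] (𝔞 : Ideal R) (M : ModuleCat.{u} R) [Module.Finite R M]
    (t : ℕ) (h : ∀ i ≤ t, IsWeaklyLaskerian R ((localCohomology 𝔞 i).obj M))
    (K : Submodule R ((localCohomology 𝔞 (t + 1)).obj M))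
    -- `K` is minimax: it has a finitely generated submodule with Artinian quotient
    (hK : ∃ L₀ : Submodule R K, L₀.FG ∧ IsArtinian R (K ⧸ L₀))
    (L : ModuleCat.{u} R) [Module.Finite R L]
    (hL : Module.support R L ⊆ PrimeSpectrum.zeroLocus (𝔞 : Set R)) :
    Module.Finite R (L →ₗ[R] (((localCohomology 𝔞 (t + 1)).obj M : Type u) ⧸ K)) ∧
      Module.Finite R
        (extModule R 1 L (ModuleCat.of R ((((localCohomology 𝔞 (t + 1)).obj M : Type u)) ⧸ K))) := by
  obtain ⟨h0, h1⟩ := main_FE (a := 𝔞) M t h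
  have hKg : Good 𝔞 K :=
    good_minimax hK (FE.zero_of_injective _ (Submodule.subtype_injective K) h0)
  have ex := LinearMap.exact_subtype_mkQ K
  have q0 := FE.right _ _ ex (Submodule.subtype_injective _) (Submodule.mkQ_surjective _) h0 (hKg _)
  have q1 := FE.right _ _ ex (Submodule.subtype_injective _) (Submodule.mkQ_surjective _) h1 (hKg _)
  refine ⟨finite_hom_iff.1 (ext_finite_of_FE (a := 𝔞) 0 ?_ L hL), ?_⟩
  · intro j hj
    obtain rfl : j = 0 := by omega
    exact q0
  · have := ext_finite_of_FE (a := 𝔞)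
      (N := ((localCohomology 𝔞 (t + 1)).obj M : Type u) ⧸ K) 1 (by
      intro j hj
      obtain rfl | rfl : j = 0 ∨ j = 1 := by omega
      · exact q0
      · exact q1) L hL
    exact (Module.Finite.equiv_iff
      (cmpE (Classical.choice (HasProjectiveResolution.out (Z := L))) _ 1)).2 this
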